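/- arXiv:1805.11323 — 3 statements merged into one kernel-verified Lean document; each statement's English description precedes it below -/
import Mathlib

section
/- Assume in addition μ ∉ {0, 1}. For all n, m ≥ 0 and generic tuples ū (length n), v̄ (length m), the modified scalar product has the modified Izergin–Korepin form ⟨0|( ν_{21}(ū) ν_{12}(v̄) |0⟩ ) = μ^{2n}(1−μ)^{m−n} Σ (−β_1)^{n_2−m_2}(−β_2)^{n_1−m_1} λ_2(ū_I)·λ_2(v̄_II)·λ_1(ū_II)·λ_1(v̄_I)·f(ū_I, ū_II)·f(v̄_II, v̄_I)·K^{(1/μ)}_{m_2,n_2}(v̄_II | ū_II)·\bar{K}^{(1/μ)}_{m_1,n_1}(v̄_I | ū_I), where the sum runs over all pairs of partitions ū ⇒ {ū_I, ū_II} and v̄ ⇒ {v̄_I, v̄_II}, with n_1 = #ū_I, n_2 = #ū_II, m_1 = #v̄_I, m_2 = #v̄_II. -/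
open scoped BigOperators

noncomputable section

/-- The rational function `g(u,v) = c/(u-v)`. -/
def gC (c u v : ℂ) : ℂ := c / (u - v)

/-- The rational function `f(u,v) = (u-v+c)/(u-v)`. -/
def fC (c u v : ℂ) : ℂ := (u - v + c) / (u - v)

/-- The rational function `h(u,v) = (u-v+c)/c`. -/
def hC (c u v : ℂ) : ℂ := (u - v + c) / c

/-- A family of parameters is generic if all pairwise differences avoid `0, ±c, ±2c`. -/
def Generic (c : ℂ) {ι : Type*} (w : ι → ℂ) : Prop :=
  ∀ i j, i ≠ j → w i - w j ≠ 0 ∧ w i - w j ≠ c ∧ w i - w j ≠ -c ∧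
    w i - w j ≠ 2 * c ∧ w i - w j ≠ -2 * c

/-- The modified Izergin determinant `K^{(z)}(x̄|ȳ)`. -/
def KIz (c z : ℂ) {ι κ : Type*} [Fintype ι] [Fintype κ] [DecidableEq κ]
    (x : ι → ℂ) (y : κ → ℂ) : ℂ :=
  Matrix.det (Matrix.of fun j k : κ =>
    -z * (if j = k then 1 else 0) +
      (∏ i, fC c (x i) (y j)) * (∏ i ∈ Finset.univ.erase j, fC c (y j) (y i))
        / hC c (y j) (y k))

/-- The conjugated modified Izergin determinant: `c` is replaced by `-c`. -/
def KIzBar (c z : ℂ) {ι κ : Type*} [Fintype ι] [Fintype κ] [DecidableEq κ]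
    (x : ι → ℂ) (y : κ → ℂ) : ℂ :=
  KIz (-c) z x y

/-- Restriction of a tuple to a subtuple indexed by a `Finset`. -/
def restr {p : ℕ} (w : Fin p → ℂ) (s : Finset (Fin p)) : {x // x ∈ s} → ℂ :=
  fun i => w i.1

/-- Double product `f(w̄_s, w̄_t)` over two subtuples of a tuple. -/
def fSS (c : ℂ) {p : ℕ} (w : Fin p → ℂ) (s t : Finset (Fin p)) : ℂ :=
  ∏ i ∈ s, ∏ j ∈ t, fC c (w i) (w j)

/-- Ordered product of operators over a subtuple (the operators pairwise commute,
so the order is irrelevant). -/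
def opProd {V : Type*} [AddCommGroup V] [Module ℂ V] {p : ℕ}
    (op : ℂ → Module.End ℂ V) (w : Fin p → ℂ) (s : Finset (Fin p)) : Module.End ℂ V :=
  ((s.sort (· ≤ ·)).map (fun i => op (w i))).prod

/-- The index subsets of a partition of `Fin p` into three parts. -/
def parts {p : ℕ} (σ : Fin p → Fin 3) (k : Fin 3) : Finset (Fin p) :=
  Finset.univ.filter (fun i => σ i = k)

/-! ### Partial fractions -/

lemma pf_gen {ι : Type*} [DecidableEq ι] (z γ : ι → ℂ) (R : Finset ι) :
    Set.InjOn z R → ∀ t : ℂ, (∀ i ∈ R, t ≠ z i) →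
    ∑ s ∈ R, γ s / (t - z s) * ∏ r ∈ R.erase s, (1 + γ r / (z s - z r))
      = ∏ r ∈ R, (1 + γ r / (t - z r)) - 1 := by
  induction R using Finset.induction_on with
  | empty => intro _ t _; simp
  | insert r R hr ih =>
    intro hinj t ht
    have hinj' : Set.InjOn z R := hinj.mono (by simp)
    have htr : t - z r ≠ 0 := sub_ne_zero.2 (ht r (by simp))
    have hne : ∀ s ∈ R, z s ≠ z r := by
      intro s hs h
      have := hinj (by simp [hs]) (by simp) h
      exact hr (this ▸ hs)
    have h1 := ih hinj' t (fun i hi => ht i (by simp [hi]))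
    have h2 := ih hinj' (z r) (fun i hi => (hne i hi).symm)
    rw [Finset.sum_insert hr, Finset.prod_insert hr, Finset.erase_insert hr]
    have h3 : ∀ s ∈ R, γ s / (t - z s) * ∏ q ∈ (insert r R).erase s, (1 + γ q / (z s - z q))
        = (1 + γ r / (t - z r)) * (γ s / (t - z s) * ∏ q ∈ R.erase s, (1 + γ q / (z s - z q)))
          - γ r / (t - z r) * (γ s / (z r - z s) * ∏ q ∈ R.erase s, (1 + γ q / (z s - z q))) := by
      intro s hs
      have hsr : s ≠ r := fun h => hr (h ▸ hs)
      rw [Finset.erase_insert_of_ne hsr.symm, Finset.prod_insert (by simp [hr])]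
      have a1 : t - z s ≠ 0 := sub_ne_zero.2 (ht s (by simp [hs]))
      have a2 : z s - z r ≠ 0 := sub_ne_zero.2 (hne s hs)
      have a3 : z r - z s ≠ 0 := sub_ne_zero.2 (hne s hs).symm
      have : γ s / (t - z s) * (1 + γ r / (z s - z r)) =
        (1 + γ r / (t - z r)) * (γ s / (t - z s)) - γ r / (t - z r) * (γ s / (z r - z s)) := by
        field_simp
        ring
      rw [← mul_assoc, this]; ring
    rw [Finset.sum_congr rfl h3, Finset.sum_sub_distrib, ← Finset.mul_sum, ← Finset.mul_sum, h1, h2]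
    ring

lemma fC_eq {c a b : ℂ} (h : a ≠ b) : fC c a b = 1 + c / (a - b) := by
  have := sub_ne_zero.2 h
  unfold fC; field_simp

/-- double product over finite sets of parameters -/
def FF (c : ℂ) (X Y : Finset ℂ) : ℂ := ∏ a ∈ X, ∏ b ∈ Y, fC c a b

lemma FF_insert_left {c : ℂ} {X Y : Finset ℂ} {a : ℂ} (h : a ∉ X) :
    FF c (insert a X) Y = FF c {a} Y * FF c X Y := by
  simp [FF, Finset.prod_insert h]

lemma FF_insert_right {c : ℂ} {X Y : Finset ℂ} {a : ℂ} (h : a ∉ Y) :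
    FF c X (insert a Y) = FF c X {a} * FF c X Y := by
  simp [FF, Finset.prod_insert h, Finset.prod_mul_distrib]

lemma FF_erase_left {c : ℂ} {X Y : Finset ℂ} {a : ℂ} (h : a ∈ X) :
    FF c X Y = FF c {a} Y * FF c (X.erase a) Y := by
  conv_lhs => rw [← Finset.insert_erase h]
  exact FF_insert_left (by simp)

lemma FF_erase_right {c : ℂ} {X Y : Finset ℂ} {a : ℂ} (h : a ∈ Y) :
    FF c X Y = FF c X {a} * FF c X (Y.erase a) := by
  conv_lhs => rw [← Finset.insert_erase h]
  exact FF_insert_right (by simp)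

@[simp] lemma FF_empty_left {c : ℂ} {Y : Finset ℂ} : FF c ∅ Y = 1 := by simp [FF]
@[simp] lemma FF_empty_right {c : ℂ} {Y : Finset ℂ} : FF c Y ∅ = 1 := by simp [FF]

lemma fC_neg (c a b : ℂ) : fC (-c) a b = fC c b a := by
  unfold fC
  rw [← neg_div_neg_eq]
  congr 1 <;> ring

lemma hC_neg (c a b : ℂ) : hC (-c) a b = hC c b a := by
  unfold hC
  rw [← neg_div_neg_eq]
  congr 1 <;> ring

lemma FF_neg (c : ℂ) (X Y : Finset ℂ) : FF (-c) X Y = FF c Y X := by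
  unfold FF
  rw [Finset.prod_comm]
  simp only [fC_neg]

/-- parameters whose differences avoid `c` -/
def Gn (c : ℂ) (W : Finset ℂ) : Prop := ∀ a ∈ W, ∀ b ∈ W, a - b ≠ c

lemma Gn.mono {c : ℂ} {W W' : Finset ℂ} (h : Gn c W) (hs : W' ⊆ W) : Gn c W' :=
  fun a ha b hb => h a (hs ha) b (hs hb)

lemma Gn.neg {c : ℂ} {W : Finset ℂ} (h : Gn c W) : Gn (-c) W := by
  intro a ha b hb e
  exact h b hb a ha (by rw [← neg_sub, e, neg_neg])

lemma Gn.add_ne {c : ℂ} {W : Finset ℂ} (h : Gn c W) {a b : ℂ} (ha : a ∈ W) (hb : b ∈ W) :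
    a - b + c ≠ 0 := by
  intro e
  exact h b hb a ha (by linear_combination -e)

lemma Gn.h_ne {c : ℂ} (hc : c ≠ 0) {W : Finset ℂ} (h : Gn c W) {a b : ℂ}
    (ha : a ∈ W) (hb : b ∈ W) : hC c a b ≠ 0 := div_ne_zero (h.add_ne ha hb) hc

lemma Gn.f_ne {c : ℂ} {W : Finset ℂ} (h : Gn c W) {a b : ℂ}
    (ha : a ∈ W) (hb : b ∈ W) (hab : a ≠ b) : fC c a b ≠ 0 :=
  div_ne_zero (h.add_ne ha hb) (sub_ne_zero.2 hab)

lemma Gn.FF_ne {c : ℂ} {W X Y : Finset ℂ} (h : Gn c W) (hX : X ⊆ W) (hY : Y ⊆ W)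
    (hd : Disjoint X Y) : FF c X Y ≠ 0 := by
  refine Finset.prod_ne_zero_iff.2 fun a ha => Finset.prod_ne_zero_iff.2 fun b hb => ?_
  exact h.f_ne (hX ha) (hY hb) (fun e => Finset.disjoint_left.1 hd ha (e ▸ hb))

lemma pf1 (c : ℂ) (R : Finset ℂ) (x : ℂ) (hx : x ∉ R) :
    ∑ s ∈ R, gC c s x * FF c {s} (R.erase s) = 1 - FF c {x} R := by
  have h := pf_gen (fun z : ℂ => z) (fun _ => c) R (fun a _ b _ h => h) x
    (fun i hi e => hx (e ▸ hi))
  have e1 : ∏ r ∈ R, (1 + c / (x - r)) = FF c {x} R := by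
    simp only [FF, Finset.prod_singleton]
    exact Finset.prod_congr rfl fun r hr => (fC_eq (by rintro rfl; exact hx hr)).symm
  rw [e1] at h
  rw [← neg_sub (FF c {x} R), ← h, ← Finset.sum_neg_distrib]
  refine Finset.sum_congr rfl fun s hs => ?_
  have e2 : ∏ r ∈ R.erase s, (1 + c / (s - r)) = FF c {s} (R.erase s) := by
    simp only [FF, Finset.prod_singleton]
    exact Finset.prod_congr rfl fun r hr => (fC_eq (Finset.ne_of_mem_erase hr).symm).symm
  rw [e2, gC, ← neg_sub x s, div_neg]; ring

lemma pf2 (c : ℂ) (hc : c ≠ 0) (X S : Finset ℂ) (x : ℂ) (hx : x ∉ S) (hd : Disjoint X S)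
    (hG : Gn c (insert x (X ∪ S))) :
    ∑ b ∈ X, FF c {b} (X.erase b) * (FF c {b} S)⁻¹ / hC c b x
      = 1 - FF c S {x} * (FF c X {x})⁻¹
        + ∑ s ∈ S, gC c s x * FF c (S.erase s) {s} * (FF c X {s})⁻¹ := by
  have mx : x ∈ insert x (X ∪ S) := by simp
  have mX : ∀ {b}, b ∈ X → b ∈ insert x (X ∪ S) := fun hb => by simp [hb]
  have mS : ∀ {b}, b ∈ S → b ∈ insert x (X ∪ S) := fun hb => by simp [hb]
  have hXS : ∀ {b s}, b ∈ X → s ∈ S → b ≠ s := fun hb hs e =>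
    Finset.disjoint_left.1 hd hb (e ▸ hs)
  have h := pf_gen (Sum.elim (fun z : ℂ => z) (fun z : ℂ => z - c))
    (Sum.elim (fun _ => c) (fun _ => -c)) (X.disjSum S) (by
      rintro (a | a) ha (b | b) hb hab
      · simpa using hab
      · simp at ha hb hab
        exact absurd (by rw [hab]; ring) (hG b (mS hb) a (mX ha))
      · simp at ha hb hab
        exact absurd (by rw [← hab]; ring) (hG a (mS ha) b (mX hb))
      · simpa using hab) (x - c) (by
      rintro (a | a) ha
      · simp at ha
        intro e
        simp at e
        exact hG x mx a (mX ha) (by rw [← e]; ring)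
      · simp at ha
        intro e
        simp at e
        exact hx (e ▸ ha))
  rw [Finset.sum_disjSum, Finset.prod_disjSum] at h
  simp only [Sum.elim_inl, Sum.elim_inr] at h
  have p1 : ∀ {t : ℂ} {S' : Finset ℂ}, S' ⊆ S → (∀ s ∈ S', t - s + c ≠ 0) →
      ∏ s ∈ S', (1 + -c / (t - (s - c))) = (FF c {t} S')⁻¹ := by
    intro t S' _ hh
    simp only [FF, Finset.prod_singleton, ← Finset.prod_inv_distrib]
    refine Finset.prod_congr rfl fun s hs => ?_
    have := hh s hs
    have h2 : t - (s - c) ≠ 0 := by rwa [← sub_add]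
    rw [fC, inv_div, eq_div_iff this]
    field_simp
    ring
  have q1 : ∀ {t : ℂ} {S' : Finset ℂ}, (∀ s ∈ S', t ≠ s) →
      ∏ s ∈ S', (1 + -c / (t - c - (s - c))) = FF c S' {t} := by
    intro t S' hh
    simp only [FF, Finset.prod_singleton]
    refine Finset.prod_congr rfl fun s hs => ?_
    have := sub_ne_zero.2 (hh s hs)
    have h2 := sub_ne_zero.2 (hh s hs).symm
    rw [fC_eq (hh s hs).symm]
    have : t - c - (s - c) = -(s - t) := by ring
    rw [this, neg_div_neg_eq]
  have q2 : ∀ {t : ℂ}, (∀ s ∈ X, s - t + c ≠ 0) →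
      ∏ s ∈ X, (1 + c / (t - c - s)) = (FF c X {t})⁻¹ := by
    intro t hh
    simp only [FF, Finset.prod_singleton, ← Finset.prod_inv_distrib]
    refine Finset.prod_congr rfl fun s hs => ?_
    have := hh s hs
    have h2 : t - c - s ≠ 0 := by
      intro e; exact this (by linear_combination -e)
    rw [fC, inv_div, eq_div_iff this]
    field_simp
    ring
  have hXx := fun s (hs : s ∈ X) => hG.add_ne (mX hs) mx
  rw [q1 (by rintro s hs rfl; exact hx hs), q2 hXx] at h
  have t1 : ∀ b ∈ X, c / (x - c - b) * ∏ r ∈ (X.disjSum S).erase (Sum.inl b),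
      (1 + (Sum.elim (fun _ => c) (fun _ => -c) r : ℂ) /
        (b - Sum.elim (fun z : ℂ => z) (fun z : ℂ => z - c) r))
      = -(FF c {b} (X.erase b) * (FF c {b} S)⁻¹ / hC c b x) := by
    intro b hb
    have : (X.disjSum S).erase (Sum.inl b) = (X.erase b).disjSum S := by
      ext (a | a) <;> simp
    rw [this, Finset.prod_disjSum]
    simp only [Sum.elim_inl, Sum.elim_inr]
    rw [p1 (Finset.Subset.refl S) (fun s hs => hG.add_ne (mX hb) (mS hs))]
    have : ∏ r ∈ X.erase b, (1 + c / (b - r)) = FF c {b} (X.erase b) := by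
      simp only [FF, Finset.prod_singleton]
      exact Finset.prod_congr rfl fun r hr => (fC_eq (Finset.ne_of_mem_erase hr).symm).symm
    rw [this, hC]
    have h1 := hXx b hb
    have h2 : x - c - b = -(b - x + c) := by ring
    rw [h2]
    field_simp
  have t2 : ∀ s ∈ S, -c / (x - c - (s - c)) * ∏ r ∈ (X.disjSum S).erase (Sum.inr s),
      (1 + (Sum.elim (fun _ => c) (fun _ => -c) r : ℂ) /
        (s - c - Sum.elim (fun z : ℂ => z) (fun z : ℂ => z - c) r))
      = gC c s x * FF c (S.erase s) {s} * (FF c X {s})⁻¹ := by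
    intro s hs
    have : (X.disjSum S).erase (Sum.inr s) = X.disjSum (S.erase s) := by
      ext (a | a) <;> simp
    rw [this, Finset.prod_disjSum]
    simp only [Sum.elim_inl, Sum.elim_inr]
    rw [q1 (fun r hr => (Finset.ne_of_mem_erase hr).symm),
      q2 (fun r hr => hG.add_ne (mX hr) (mS hs)), gC]
    have : x - c - (s - c) = -(s - x) := by ring
    rw [this, neg_div_neg_eq]
    ring
  rw [Finset.sum_congr rfl t1, Finset.sum_congr rfl t2, Finset.sum_neg_distrib] at h
  linear_combination -h

/-! ### The sum form of the Izergin determinant -/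

/-- the modified Izergin determinant as a sum over subsets -/
def Kz (c z : ℂ) (X Y : Finset ℂ) : ℂ :=
  ∑ S ∈ Y.powerset, (-z) ^ (Y \ S).card * FF c S (Y \ S) * FF c X S

lemma sum_swap {α M : Type*} [DecidableEq α] [AddCommMonoid M] (W : Finset α)
    (F : α → Finset α → M) :
    ∑ a ∈ W, ∑ T ∈ (W.erase a).powerset, F a T = ∑ T ∈ W.powerset, ∑ a ∈ T, F a (T.erase a) := by
  rw [Finset.sum_sigma', Finset.sum_sigma']
  refine Finset.sum_bij' (fun p _ => ⟨insert p.1 p.2, p.1⟩) (fun p _ => ⟨p.2, p.1.erase p.2⟩)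
    ?_ ?_ ?_ ?_ ?_
  · rintro ⟨a, T⟩ h
    simp only [Finset.mem_sigma, Finset.mem_powerset] at h ⊢
    refine ⟨Finset.insert_subset h.1 (h.2.trans (Finset.erase_subset _ _)), by simp⟩
  · rintro ⟨T, a⟩ h
    simp only [Finset.mem_sigma, Finset.mem_powerset] at h ⊢
    exact ⟨h.1 h.2, Finset.erase_subset_erase _ h.1⟩
  · rintro ⟨a, T⟩ h
    simp only [Finset.mem_sigma, Finset.mem_powerset] at h
    have : a ∉ T := fun h' => by simpa using h.2 h'
    simp [this]
  · rintro ⟨T, a⟩ h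
    simp only [Finset.mem_sigma, Finset.mem_powerset] at h
    simp [Finset.insert_erase h.2]
  · rintro ⟨a, T⟩ h
    simp only [Finset.mem_sigma, Finset.mem_powerset] at h
    have : a ∉ T := fun h' => by simpa using h.2 h'
    simp [this]

lemma sum_swap' {α M : Type*} [DecidableEq α] [AddCommMonoid M] (W : Finset α)
    (F : α → Finset α → M) :
    ∑ T ∈ W.powerset, ∑ a ∈ T, F a (T.erase a) = ∑ T ∈ W.powerset, ∑ a ∈ W \ T, F a T := by
  rw [← sum_swap]
  refine Finset.sum_comm' ?_
  intro a T
  simp only [Finset.mem_powerset, Finset.mem_sdiff, Finset.subset_erase]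
  tauto

lemma shift_id (c z : ℂ) (X Y : Finset ℂ) (x : ℂ) (hx : x ∉ Y) :
    z * ∑ S ∈ Y.powerset, (-z) ^ (Y \ S).card * FF c S (Y \ S) *
        ∑ s ∈ S, gC c s x * FF c (S.erase s) {s} * FF c X (S.erase s)
      = ∑ S ∈ Y.powerset, (-z) ^ (Y \ S).card * FF c S (Y \ S) * FF c X S *
          (FF c {x} (Y \ S) - 1) := by
  have h1 : ∀ S ∈ Y.powerset, (-z) ^ (Y \ S).card * FF c S (Y \ S) *
        ∑ s ∈ S, gC c s x * FF c (S.erase s) {s} * FF c X (S.erase s)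
      = ∑ s ∈ S, (fun s T => (-z) ^ ((Y \ T).card - 1) * gC c s x * FF c T (Y \ T) *
          FF c {s} ((Y \ T).erase s) * FF c X T) s (S.erase s) := by
    intro S hS
    rw [Finset.mem_powerset] at hS
    rw [Finset.mul_sum]
    refine Finset.sum_congr rfl fun s hs => ?_
    have e1 : Y \ S.erase s = insert s (Y \ S) := by
      ext a
      simp only [Finset.mem_sdiff, Finset.mem_erase, Finset.mem_insert]
      have := @hS s hs
      by_cases h : a = s
      · subst h; simp [this]
      · simp [h]
    have e2 : s ∉ Y \ S := by simp [hs]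
    simp only [e1, Finset.card_insert_of_notMem e2, Finset.erase_insert e2, Nat.add_sub_cancel,
      FF_insert_right e2]
    rw [FF_erase_left (Y := Y \ S) hs]
    ring
  rw [Finset.sum_congr rfl h1, sum_swap' Y (fun s T => (-z) ^ ((Y \ T).card - 1) * gC c s x *
    FF c T (Y \ T) * FF c {s} ((Y \ T).erase s) * FF c X T), Finset.mul_sum]
  refine Finset.sum_congr rfl fun T hT => ?_
  have := pf1 c (Y \ T) x (by simp [hx])
  rw [← neg_sub, ← this, Finset.mul_sum, ← Finset.sum_neg_distrib, Finset.mul_sum]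
  refine Finset.sum_congr rfl fun s hs => ?_
  have hcard : (Y \ T).card = (Y \ T).card - 1 + 1 := by
    have := Finset.card_pos.2 ⟨s, hs⟩
    omega
  conv_rhs => rw [hcard]
  rw [pow_succ]
  ring

lemma master (c : ℂ) (hc : c ≠ 0) (z : ℂ) (X Y : Finset ℂ) (x : ℂ) (hx : x ∉ Y)
    (hd : Disjoint X Y) (hG : Gn c (insert x (X ∪ Y))) :
    z * ∑ b ∈ X, FF c {b} (X.erase b) / hC c b x * Kz c z (X.erase b) Y
      = (z - 1) * Kz c z X Y
        + ∑ S ∈ Y.powerset, (-z) ^ (Y \ S).card * FF c S (Y \ S) * FF c X S * FF c {x} (Y \ S)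
        - z * (FF c X {x})⁻¹ *
          ∑ S ∈ Y.powerset, (-z) ^ (Y \ S).card * FF c S (Y \ S) * FF c X S * FF c S {x} := by
  have key : ∀ S ∈ Y.powerset, (-z) ^ (Y \ S).card * FF c S (Y \ S) *
      ∑ b ∈ X, FF c {b} (X.erase b) / hC c b x * FF c (X.erase b) S
      = (-z) ^ (Y \ S).card * FF c S (Y \ S) * FF c X S * (1 - FF c S {x} * (FF c X {x})⁻¹)
        + (-z) ^ (Y \ S).card * FF c S (Y \ S) *
        ∑ s ∈ S, gC c s x * FF c (S.erase s) {s} * FF c X (S.erase s) := by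
    intro S hS
    rw [Finset.mem_powerset] at hS
    have hdS := Finset.disjoint_of_subset_right hS hd
    have hGS : Gn c (insert x (X ∪ S)) :=
      hG.mono (Finset.insert_subset_insert _ (Finset.union_subset_union_right hS))
    have h := pf2 c hc X S x (fun h => hx (hS h)) hdS hGS
    have e1 : ∑ b ∈ X, FF c {b} (X.erase b) / hC c b x * FF c (X.erase b) S
        = FF c X S * ∑ b ∈ X, FF c {b} (X.erase b) * (FF c {b} S)⁻¹ / hC c b x := by
      rw [Finset.mul_sum]
      refine Finset.sum_congr rfl fun b hb => ?_
      have hne : FF c {b} S ≠ 0 := hGS.FF_ne (by simp [hb])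
        (fun a ha => by simp [ha]) (Finset.disjoint_of_subset_left (by simpa using hb) hdS)
      rw [FF_erase_left (Y := S) hb]
      field_simp
    have e2 : ∑ s ∈ S, gC c s x * FF c (S.erase s) {s} * FF c X (S.erase s)
        = FF c X S * ∑ s ∈ S, gC c s x * FF c (S.erase s) {s} * (FF c X {s})⁻¹ := by
      rw [Finset.mul_sum]
      refine Finset.sum_congr rfl fun s hs => ?_
      have hne : FF c X {s} ≠ 0 := hGS.FF_ne (fun a ha => by simp [ha]) (by simp [hs])
        (Finset.disjoint_of_subset_right (by simpa using hs) hdS)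
      rw [FF_erase_right (X := X) hs]
      field_simp
    rw [e1, e2, h]
    ring
  have e0 : ∑ b ∈ X, FF c {b} (X.erase b) / hC c b x * Kz c z (X.erase b) Y
      = ∑ S ∈ Y.powerset, (-z) ^ (Y \ S).card * FF c S (Y \ S) *
      ∑ b ∈ X, FF c {b} (X.erase b) / hC c b x * FF c (X.erase b) S := by
    simp only [Kz, Finset.mul_sum]
    rw [Finset.sum_comm]
    refine Finset.sum_congr rfl fun S _ => Finset.sum_congr rfl fun b _ => ?_
    ring
  rw [e0, Finset.sum_congr rfl key, Finset.sum_add_distrib, mul_add, shift_id c z X Y x hx, Kz]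
  simp only [Finset.mul_sum]
  rw [← Finset.sum_add_distrib, ← Finset.sum_add_distrib, ← Finset.sum_sub_distrib]
  refine Finset.sum_congr rfl fun S _ => ?_
  ring

/-- the one-sided factor of the recursion -/
def EE (c z κ : ℂ) (x : ℂ) (X Y : Finset ℂ) : ℂ :=
  Kz c z X Y - κ * ∑ b ∈ X, FF c {b} (X.erase b) / hC c b x * Kz c z (X.erase b) Y

lemma EE_mem (c : ℂ) (hc : c ≠ 0) (μ : ℂ) (h0 : μ ≠ 0) (h1 : 1 - μ ≠ 0) (X Y : Finset ℂ) (x : ℂ)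
    (hxX : x ∉ X) (hx : x ∉ Y) (hd : Disjoint X Y) (hG : Gn c (insert x (X ∪ Y))) :
    EE c μ⁻¹ (1 - μ)⁻¹ x (insert x X) Y = -(μ * (1 - μ)⁻¹) * (FF c {x} Y * Kz c μ⁻¹ X Y) := by
  have h := master c hc μ⁻¹ (insert x X) Y x hx (by simp [hx, hd]) (by simpa using hG)
  have e1 : FF c (insert x X) {x} = 0 := by
    rw [FF_insert_left hxX]; simp [FF, fC]
  have e2 : ∑ S ∈ Y.powerset, (-μ⁻¹) ^ (Y \ S).card * FF c S (Y \ S) * FF c (insert x X) S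
      * FF c {x} (Y \ S) = FF c {x} Y * Kz c μ⁻¹ X Y := by
    rw [Kz, Finset.mul_sum]
    refine Finset.sum_congr rfl fun S hS => ?_
    rw [Finset.mem_powerset] at hS
    have : FF c {x} Y = FF c {x} (Y \ S) * FF c {x} S := by
      simp only [FF, Finset.prod_singleton]
      exact (Finset.prod_sdiff hS).symm
    rw [FF_insert_left hxX, this]; ring
  rw [e1, e2] at h
  rw [EE]
  field_simp at h ⊢
  linear_combination -h

lemma EE_notMem (c : ℂ) (hc : c ≠ 0) (μ : ℂ) (h0 : μ ≠ 0) (h1 : 1 - μ ≠ 0) (X Y : Finset ℂ) (x : ℂ)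
    (hxX : x ∉ X) (hx : x ∉ Y) (hd : Disjoint X Y) (hG : Gn c (insert x (X ∪ Y))) :
    FF c X {x} * EE c μ⁻¹ (1 - μ)⁻¹ x X Y = -(μ * (1 - μ)⁻¹) * Kz c μ⁻¹ X (insert x Y) := by
  have h := master c hc μ⁻¹ X Y x hx hd hG
  have hne : FF c X {x} ≠ 0 := hG.FF_ne (fun a ha => by simp [ha]) (by simp) (by simpa using hxX)
  have e1 : Kz c μ⁻¹ X (insert x Y) =
     - μ⁻¹ * ∑ S ∈ Y.powerset, (-μ⁻¹) ^ (Y \ S).card * FF c S (Y \ S) * FF c X S * FF c S {x}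
     + FF c X {x} *
      ∑ S ∈ Y.powerset, (-μ⁻¹) ^ (Y \ S).card * FF c S (Y \ S) * FF c X S * FF c {x} (Y \ S) := by
    rw [Kz, Finset.sum_powerset_insert hx, Finset.mul_sum, Finset.mul_sum]
    congr 1
    · refine Finset.sum_congr rfl fun S hS => ?_
      rw [Finset.mem_powerset] at hS
      have hxS : x ∉ S := fun h => hx (hS h)
      have hxn : x ∉ Y \ S := by simp [hx]
      rw [Finset.insert_sdiff_of_notMem _ hxS, Finset.card_insert_of_notMem hxn,
        FF_insert_right hxn]
      ring
    · refine Finset.sum_congr rfl fun S hS => ?_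
      rw [Finset.mem_powerset] at hS
      have hxS : x ∉ S := fun h => hx (hS h)
      have : insert x Y \ insert x S = Y \ S := by
        rw [Finset.insert_sdiff_insert, Finset.sdiff_insert_of_notMem hx]
      rw [this, FF_insert_right hxS, FF_insert_left hxS]
      ring
  rw [e1, EE]
  generalize (∑ S ∈ Y.powerset, (-μ⁻¹) ^ (Y \ S).card * FF c S (Y \ S) * FF c X S * FF c S {x}) = A at *
  generalize (∑ S ∈ Y.powerset, (-μ⁻¹) ^ (Y \ S).card * FF c S (Y \ S) * FF c X S * FF c {x} (Y \ S)) = B at *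
  generalize (∑ b ∈ X, FF c {b} (X.erase b) / hC c b x * Kz c μ⁻¹ (X.erase b) Y) = D at *
  have h' : D = (1 - μ) * Kz c μ⁻¹ X Y + μ * B - (FF c X {x})⁻¹ * A := by
    have : D = μ * (μ⁻¹ * D) := by field_simp
    rw [this, h]; field_simp
  rw [h']
  field_simp
  ring

/-! ### Action of the operators on Bethe vectors -/

/-- coefficient of the `λ₁` action -/
def AA (c x a : ℂ) (W : Finset ℂ) : ℂ := FF c (W.erase a) {a} / hC c x a

/-- coefficient of the `λ₂` action -/
def DD (c x b : ℂ) (W : Finset ℂ) : ℂ := FF c {b} (W.erase b) / hC c b x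

lemma AA_neg (c x a : ℂ) (W : Finset ℂ) : AA (-c) x a W = DD c x a W := by
  rw [AA, DD, FF_neg, hC_neg]

lemma FF_single (c a b : ℂ) : FF c {a} {b} = fC c a b := by simp [FF]

lemma AA_erase (c x a y : ℂ) (W : Finset ℂ) (hy : y ∈ W) (hya : y ≠ a) :
    AA c x a W = fC c y a * AA c x a (W.erase y) := by
  rw [AA, AA, FF_erase_left (X := W.erase a) (a := y) (by simp [hy, hya]), FF_single,
    Finset.erase_right_comm]
  ring

lemma DD_erase (c x b y : ℂ) (W : Finset ℂ) (hy : y ∈ W) (hyb : y ≠ b) :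
    DD c x b W = fC c b y * DD c x b (W.erase y) := by
  rw [DD, DD, FF_erase_right (Y := W.erase b) (a := y) (by simp [hy, hyb]), FF_single,
    Finset.erase_right_comm]
  ring

lemma hC_self (c x : ℂ) (hc : c ≠ 0) : hC c x x = 1 := by simp [hC, hc]

lemma act11 {V : Type*} [AddCommGroup V] [Module ℂ V] (c : ℂ) (hc : c ≠ 0)
    (t11 t12 : ℂ → Module.End ℂ V) (l1 : ℂ → ℂ) (B : Finset ℂ → V)
    (hB : ∀ a W, a ∉ W → B (insert a W) = t12 a (B W))
    (h0 : ∀ x, t11 x (B ∅) = l1 x • B ∅)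
    (hR : ∀ x y w, x ≠ y → t11 x (t12 y w) = fC c y x • t12 y (t11 x w)
      + gC c x y • t12 x (t11 y w))
    (v : Finset ℂ) : ∀ x, x ∉ v → Gn c (insert x v) →
    t11 x (B v) = ∑ a ∈ insert x v, (l1 a * AA c x a (insert x v)) • B ((insert x v).erase a) := by
  induction v using Finset.induction_on with
  | empty =>
    intro x _ _
    simp [h0, AA, hC_self c x hc]
  | insert y v hy ih =>
    intro x hx hG
    have hxy : x ≠ y := fun h => hx (by simp [h])
    have hxv : x ∉ v := fun h => hx (by simp [h])
    rw [hB y v hy, hR x y _ hxy, ih x hxv (hG.mono (Finset.insert_subset_insert _ (by simp))),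
      ih y hy (hG.mono (by simp)), map_sum, map_sum, Finset.smul_sum, Finset.smul_sum]
    simp only [map_smul, smul_smul]
    have hyx : y ∉ insert x v := by simp [hy, hxy.symm]
    have hyxv : ∀ a ∈ v, (insert x (insert y v)).erase a = insert y ((insert x v).erase a) := by
      intro a ha
      rw [Finset.insert_comm, Finset.erase_insert_of_ne (by rintro rfl; exact hy ha)]
    have hyxv2 : ∀ a ∈ v, (insert x (insert y v)).erase a = insert x ((insert y v).erase a) := by
      intro a ha
      rw [Finset.erase_insert_of_ne (by rintro rfl; exact hxv ha)]
    rw [Finset.sum_insert hxv, Finset.sum_insert hy, Finset.sum_insert hx, Finset.sum_insert hy]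
    have e1 : (fC c y x * (l1 x * AA c x x (insert x v))) • t12 y (B ((insert x v).erase x))
        = (l1 x * AA c x x (insert x (insert y v))) • B ((insert x (insert y v)).erase x) := by
      rw [Finset.erase_insert hx, Finset.erase_insert hxv, hB y v hy,
        AA_erase c x x y (insert x (insert y v)) (by simp) hxy.symm, Finset.insert_comm,
        Finset.erase_insert hyx]
      congr 1; ring
    have e2 : (gC c x y * (l1 y * AA c y y (insert y v))) • t12 x (B ((insert y v).erase y))
        = (l1 y * AA c x y (insert x (insert y v))) • B ((insert x (insert y v)).erase y) := by
      have hxyv : x ∉ insert y v := hx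
      rw [AA_erase c x y x (insert x (insert y v)) (by simp) hxy, Finset.erase_insert hx,
        Finset.insert_comm, Finset.erase_insert hyx, Finset.erase_insert hy, hB x v hxv]
      congr 1
      have h1 := hG.h_ne hc (a := x) (b := y) (by simp) (by simp)
      have h2 := sub_ne_zero.2 hxy
      have h3 := hG.add_ne (a := x) (b := y) (by simp) (by simp)
      simp only [AA, hC_self c y hc]
      rw [gC, fC, hC]
      field_simp
    have e3 : ∀ a ∈ v, (l1 a * AA c x a (insert x (insert y v))) •
          B ((insert x (insert y v)).erase a)
        = (fC c y x * (l1 a * AA c x a (insert x v))) • t12 y (B ((insert x v).erase a))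
        + (gC c x y * (l1 a * AA c y a (insert y v))) • t12 x (B ((insert y v).erase a)) := by
      intro a ha
      have hax : a ≠ x := fun h => hxv (h ▸ ha)
      have hay : a ≠ y := fun h => hy (h ▸ ha)
      rw [← hB y _ (by simp [hy, hxy.symm]), ← hB x _ (by simp [hxv, hxy]), ← hyxv a ha,
        ← hyxv2 a ha, ← add_smul]
      congr 1
      rw [AA_erase c x a y _ (by simp) hay.symm,
        AA_erase c x a x ((insert x (insert y v)).erase y) (by simp [hxy]) hax.symm,
        AA_erase c x a x (insert x v) (by simp) hax.symm,
        AA_erase c y a y (insert y v) (by simp) hay.symm, Finset.erase_insert hxv,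
        Finset.erase_insert hy, Finset.insert_comm x y, Finset.erase_insert hyx,
        Finset.erase_insert hxv]
      have h1 := hG.add_ne (a := x) (b := a) (by simp) (by simp [ha])
      have h2 := hG.add_ne (a := y) (b := a) (by simp) (by simp [ha])
      have h3 := sub_ne_zero.2 hxy
      have h4 := sub_ne_zero.2 hxy.symm
      have h5 := sub_ne_zero.2 hax.symm
      have h6 := sub_ne_zero.2 hay.symm
      simp only [AA, gC, fC, hC]
      generalize FF c (v.erase a) {a} = Q
      field_simp
      ring
    rw [e1, e2, Finset.sum_congr rfl e3, Finset.sum_add_distrib]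
    abel

lemma coef21 (c : ℂ) (hc : c ≠ 0) (W : Finset ℂ) (hG : Gn c W) (x y a b : ℂ) (hxy : x ≠ y)
    (hx : x ∈ W) (hy : y ∈ W) (hb : b ∈ W) (ha : a ∈ W) (hab : a ≠ b) :
    DD c x b W * AA c x a (W.erase b)
      = (if b ≠ y ∧ a ≠ y then DD c x b (W.erase y) * AA c x a ((W.erase y).erase b) else 0)
       + gC c x y * ((if b ≠ y then DD c x b (W.erase y) * AA c y a (W.erase b) else 0)
         - (if b ≠ x then DD c y b (W.erase x) * AA c x a (W.erase b) else 0)) := by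
  have hyx := hxy.symm
  have n1 := sub_ne_zero.2 hxy
  have n2 := sub_ne_zero.2 hyx
  have n3 := sub_ne_zero.2 hab
  have n4 := sub_ne_zero.2 hab.symm
  have m1 := hG.add_ne hx hy
  have m2 := hG.add_ne hy hx
  have m3 := hG.add_ne hx ha
  have m4 := hG.add_ne hy ha
  have m5 := hG.add_ne hb hx
  have m6 := hG.add_ne hb hy
  by_cases hby : b = y
  · subst hby
    have hD : DD c x b W = fC c b x * DD c x b (W.erase x) := DD_erase c x b x W hx hxy
    simp only [hD, hyx, ne_eq, not_true_eq_false, false_and, if_false, not_false_eq_true, if_true]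
    have : DD c x b (W.erase x) = DD c b b (W.erase x) * (hC c b x)⁻¹ := by
      rw [DD, DD, hC_self c b hc]; ring
    rw [this, gC, fC, hC]
    field_simp
    ring
  by_cases hbx : b = x
  · subst hbx
    rw [DD_erase c b b y W hy hyx]
    by_cases hay : a = y
    · subst hay
      simp only [AA, hC_self c a hc, ne_eq, hby, not_false_eq_true, not_true_eq_false, and_false,
        if_true, if_false]
      rw [gC, fC, hC]
      field_simp
      ring
    · have n5 := sub_ne_zero.2 (Ne.symm hay)
      simp only [ne_eq, hby, hay, not_false_eq_true, and_self, not_true_eq_false, if_true, if_false]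
      rw [AA_erase c b a y (W.erase b) (by simp [hy, hyx]) (Ne.symm hay),
        AA_erase c y a y (W.erase b) (by simp [hy, hyx]) (Ne.symm hay),
        Finset.erase_right_comm (a := y)]
      simp only [AA, gC, fC, hC]
      field_simp
      ring
  · have k1 := sub_ne_zero.2 hby
    have k2 := sub_ne_zero.2 hbx
    have hbx' : x ≠ b := Ne.symm hbx
    have hby' : y ≠ b := Ne.symm hby
    rw [DD_erase c x b y W hy (Ne.symm hby),
      DD_erase c x b x (W.erase y) (by simp [hx, hxy]) (Ne.symm hbx),
      DD_erase c y b y (W.erase x) (by simp [hy, hyx]) (Ne.symm hby),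
      Finset.erase_right_comm (a := x) (b := y)]
    by_cases hay : a = y
    · subst hay
      simp only [AA, hC_self c a hc, ne_eq, hby, hbx, not_false_eq_true, not_true_eq_false,
        and_false, if_true, if_false]
      simp only [DD, gC, fC, hC]
      field_simp
      ring
    · have n5 := sub_ne_zero.2 (Ne.symm hay)
      simp only [ne_eq, hby, hbx, hay, not_false_eq_true, and_self, if_true]
      rw [AA_erase c x a y (W.erase b) (by simp [hy, hby']) (Ne.symm hay),
        AA_erase c y a y (W.erase b) (by simp [hy, hby']) (Ne.symm hay),
        Finset.erase_right_comm (s := W) (a := y) (b := b)]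
      simp only [AA, DD, gC, fC, hC]
      field_simp
      ring

lemma act21 {V : Type*} [AddCommGroup V] [Module ℂ V] (c : ℂ) (hc : c ≠ 0)
    (t11 t22 t21 t12 : ℂ → Module.End ℂ V) (l1 l2 : ℂ → ℂ) (B : Finset ℂ → V)
    (hB : ∀ a W, a ∉ W → B (insert a W) = t12 a (B W))
    (h0 : ∀ x, t21 x (B ∅) = 0)
    (hR : ∀ x y w, x ≠ y → t21 x (t12 y w) = t12 y (t21 x w)
      + gC c x y • (t11 y (t22 x w) - t11 x (t22 y w)))
    (a11 : ∀ v x, x ∉ v → Gn c (insert x v) →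
      t11 x (B v) = ∑ a ∈ insert x v, (l1 a * AA c x a (insert x v)) • B ((insert x v).erase a))
    (a22 : ∀ v x, x ∉ v → Gn c (insert x v) →
      t22 x (B v) = ∑ a ∈ insert x v, (l2 a * DD c x a (insert x v)) • B ((insert x v).erase a))
    (v : Finset ℂ) : ∀ x, x ∉ v → Gn c (insert x v) →
    t21 x (B v) = ∑ b ∈ insert x v, ∑ a ∈ (insert x v).erase b,
      (l2 b * l1 a * (DD c x b (insert x v) * AA c x a ((insert x v).erase b))) •
        B (((insert x v).erase b).erase a) := by
  induction v using Finset.induction_on with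
  | empty =>
    intro x _ _
    simp [h0]
  | insert y v hy ih =>
    intro x hx hG
    have hxy : x ≠ y := fun h => hx (by simp [h])
    have hxv : x ∉ v := fun h => hx (by simp [h])
    have hyx : y ∉ insert x v := by simp [hy, hxy.symm]
    have hxW : x ∈ insert x (insert y v) := by simp
    have hyW : y ∈ insert x (insert y v) := by simp
    have eWy : (insert x (insert y v)).erase y = insert x v := by
      rw [Finset.insert_comm, Finset.erase_insert hyx]
    have eWx : (insert x (insert y v)).erase x = insert y v := Finset.erase_insert hx
    generalize hW : insert x (insert y v) = W at *
    have T1 : t12 y (t21 x (B v)) = ∑ b ∈ W, ∑ a ∈ W.erase b, (l2 b * l1 a *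
        (if b ≠ y ∧ a ≠ y then DD c x b (W.erase y) * AA c x a ((W.erase y).erase b) else 0)) •
        B ((W.erase b).erase a) := by
      rw [ih x hxv (by rw [← eWy]; exact hG.mono (Finset.erase_subset _ _)), ← eWy, map_sum]
      rw [← Finset.add_sum_erase W _ hyW]
      simp only [ne_eq, not_true_eq_false, false_and, if_false, mul_zero, zero_smul,
        Finset.sum_const_zero, zero_add]
      refine Finset.sum_congr rfl fun b hb => ?_
      have hby := Finset.ne_of_mem_erase hb
      rw [← Finset.add_sum_erase (W.erase b) _ (a := y) (by simp [hyW, Ne.symm hby])]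
      simp only [not_true_eq_false, and_false, if_false, mul_zero, zero_smul, zero_add, map_sum,
        map_smul]
      rw [Finset.erase_right_comm]
      refine Finset.sum_congr rfl fun a ha => ?_
      have hay := Finset.ne_of_mem_erase ha
      rw [if_pos ⟨hby, hay⟩, ← hB y _ (by simp), Finset.erase_right_comm (a := y),
        Finset.insert_erase (by simp [hyW, Ne.symm hby, Ne.symm hay])]
    have T2 : t11 y (t22 x (B v)) = ∑ b ∈ W, ∑ a ∈ W.erase b, (l2 b * l1 a *
        (if b ≠ y then DD c x b (W.erase y) * AA c y a (W.erase b) else 0)) •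
        B ((W.erase b).erase a) := by
      rw [a22 v x hxv (by rw [← eWy]; exact hG.mono (Finset.erase_subset _ _)), ← eWy, map_sum]
      rw [← Finset.add_sum_erase W _ hyW]
      simp only [ne_eq, not_true_eq_false, if_false, mul_zero, zero_smul,
        Finset.sum_const_zero, zero_add]
      refine Finset.sum_congr rfl fun b hb => ?_
      have hby := Finset.ne_of_mem_erase hb
      have e : insert y ((W.erase y).erase b) = W.erase b := by
        rw [Finset.erase_right_comm, Finset.insert_erase (by simp [hyW, Ne.symm hby])]
      rw [map_smul, a11 _ y (by simp) (by rw [e]; exact hG.mono (Finset.erase_subset _ _)), e,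
        Finset.smul_sum]
      refine Finset.sum_congr rfl fun a ha => ?_
      rw [if_pos hby, smul_smul]
      congr 1; ring
    have T3 : t11 x (t22 y (B v)) = ∑ b ∈ W, ∑ a ∈ W.erase b, (l2 b * l1 a *
        (if b ≠ x then DD c y b (W.erase x) * AA c x a (W.erase b) else 0)) •
        B ((W.erase b).erase a) := by
      rw [a22 v y hy (by rw [← eWx]; exact hG.mono (Finset.erase_subset _ _)), ← eWx, map_sum]
      rw [← Finset.add_sum_erase W _ hxW]
      simp only [ne_eq, not_true_eq_false, if_false, mul_zero, zero_smul,
        Finset.sum_const_zero, zero_add]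
      refine Finset.sum_congr rfl fun b hb => ?_
      have hby := Finset.ne_of_mem_erase hb
      have e : insert x ((W.erase x).erase b) = W.erase b := by
        rw [Finset.erase_right_comm, Finset.insert_erase (by simp [hxW, Ne.symm hby])]
      rw [map_smul, a11 _ x (by simp) (by rw [e]; exact hG.mono (Finset.erase_subset _ _)), e,
        Finset.smul_sum]
      refine Finset.sum_congr rfl fun a ha => ?_
      rw [if_pos hby, smul_smul]
      congr 1; ring
    rw [hB y v hy, hR x y _ hxy, T1, T2, T3, ← Finset.sum_sub_distrib, Finset.smul_sum,
      ← Finset.sum_add_distrib]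
    refine Finset.sum_congr rfl fun b hb => ?_
    rw [← Finset.sum_sub_distrib, Finset.smul_sum, ← Finset.sum_add_distrib]
    refine Finset.sum_congr rfl fun a ha => ?_
    rw [← sub_smul, smul_smul, ← add_smul, coef21 c hc W hG x y a b hxy hxW hyW hb
      (Finset.mem_of_mem_erase ha) (Finset.ne_of_mem_erase ha)]
    congr 1; ring

/-! ### The recursion for the sum over partitions -/

/-- sum over partitions of one tuple, with two arbitrary weights -/
def JJ (c : ℂ) (q1 q2 : ℂ → ℂ) (K1 K2 : Finset ℂ → ℂ) (W : Finset ℂ) : ℂ :=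
  ∑ T ∈ W.powerset, (∏ a ∈ T, q1 a) * (∏ a ∈ W \ T, q2 a) * FF c (W \ T) T * K1 (W \ T) * K2 T

lemma JJ_symm (c : ℂ) (q1 q2 : ℂ → ℂ) (K1 K2 : Finset ℂ → ℂ) (W : Finset ℂ) :
    JJ c q1 q2 K1 K2 W = JJ (-c) q2 q1 K2 K1 W := by
  unfold JJ
  refine Finset.sum_bij' (fun T _ => W \ T) (fun T _ => W \ T) ?_ ?_ ?_ ?_ ?_
  · intro T _; simp
  · intro T _; simp
  · intro T hT; exact Finset.sdiff_sdiff_eq_self (Finset.mem_powerset.1 hT)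
  · intro T hT; exact Finset.sdiff_sdiff_eq_self (Finset.mem_powerset.1 hT)
  · intro T hT
    rw [Finset.sdiff_sdiff_eq_self (Finset.mem_powerset.1 hT), FF_neg]
    ring

/-- lowering operator on weights -/
def LL (c x : ℂ) (K : Finset ℂ → ℂ) (X : Finset ℂ) : ℂ := ∑ a ∈ X, AA c x a X * K (X.erase a)

lemma JJ_low (c x : ℂ) (q1 q2 : ℂ → ℂ) (K1 K2 : Finset ℂ → ℂ) (W : Finset ℂ) :
    ∑ a ∈ W, q1 a * AA c x a W * JJ c q1 q2 K1 K2 (W.erase a)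
      = JJ c q1 q2 K1 (LL c x K2) W := by
  simp only [JJ, Finset.mul_sum]
  rw [sum_swap W (fun a T => q1 a * AA c x a W * ((∏ a ∈ T, q1 a) * (∏ b ∈ W.erase a \ T, q2 b) *
    FF c (W.erase a \ T) T * K1 (W.erase a \ T) * K2 T))]
  refine Finset.sum_congr rfl fun T hT => ?_
  rw [Finset.mem_powerset] at hT
  rw [LL, Finset.mul_sum]
  refine Finset.sum_congr rfl fun a ha => ?_
  have e1 : W.erase a \ T.erase a = W \ T := by
    ext b
    simp only [Finset.mem_sdiff, Finset.mem_erase]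
    by_cases h : b = a
    · subst h; simp [ha]
    · simp [h]
  have e2 : FF c (W.erase a) {a} = FF c (W \ T) {a} * FF c (T.erase a) {a} := by
    have h1 : W.erase a = (W \ T) ∪ T.erase a := by
      ext b
      simp only [Finset.mem_sdiff, Finset.mem_erase, Finset.mem_union]
      have := @hT b
      by_cases h : b = a
      · subst h; simp [ha]
      · tauto
    have h2 : Disjoint (W \ T) (T.erase a) :=
      Finset.disjoint_of_subset_right (Finset.erase_subset _ _) Finset.sdiff_disjoint
    rw [h1, FF, Finset.prod_union h2]; rfl
  rw [e1, AA, e2, FF_erase_right (X := W \ T) ha, ← Finset.mul_prod_erase T q1 ha, AA]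
  ring

lemma JJ_low' (c x : ℂ) (q1 q2 : ℂ → ℂ) (K1 K2 : Finset ℂ → ℂ) (W : Finset ℂ) :
    ∑ b ∈ W, q2 b * DD c x b W * JJ c q1 q2 K1 K2 (W.erase b)
      = JJ c q1 q2 (LL (-c) x K1) K2 W := by
  rw [JJ_symm, ← JJ_low]
  refine Finset.sum_congr rfl fun b _ => ?_
  rw [← JJ_symm, AA_neg]

lemma JJ_rec (c x κ : ℂ) (q1 q2 : ℂ → ℂ) (K1 K2 : Finset ℂ → ℂ) (W : Finset ℂ) :
    JJ c q1 q2 K1 K2 W - κ * ∑ a ∈ W, q1 a * AA c x a W * JJ c q1 q2 K1 K2 (W.erase a)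
      - κ * ∑ b ∈ W, q2 b * DD c x b W * JJ c q1 q2 K1 K2 (W.erase b)
      + κ ^ 2 * ∑ b ∈ W, q2 b * DD c x b W * ∑ a ∈ W.erase b, q1 a * AA c x a (W.erase b) *
          JJ c q1 q2 K1 K2 ((W.erase b).erase a)
    = JJ c q1 q2 (fun X => K1 X - κ * LL (-c) x K1 X) (fun X => K2 X - κ * LL c x K2 X) W := by
  simp only [JJ_low, JJ_low']
  simp only [JJ, Finset.mul_sum]
  rw [← Finset.sum_sub_distrib, ← Finset.sum_sub_distrib, ← Finset.sum_add_distrib]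
  refine Finset.sum_congr rfl fun T _ => ?_
  ring

/-- the full sum over pairs of partitions -/
def GG (c z : ℂ) (p1 p2 q1 q2 : ℂ → ℂ) (U V : Finset ℂ) : ℂ :=
  ∑ S ∈ U.powerset, (∏ a ∈ S, p2 a) * (∏ a ∈ U \ S, p1 a) * FF c S (U \ S) *
    JJ c q1 q2 (fun X => Kz c z X (U \ S)) (fun X => Kz (-c) z X S) V

lemma EE_eq (c z κ x : ℂ) (X Y : Finset ℂ) :
    EE c z κ x X Y = Kz c z X Y - κ * LL (-c) x (fun X => Kz c z X Y) X := by
  unfold EE LL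
  simp only [AA_neg, DD]

lemma GG_rec (c : ℂ) (hc : c ≠ 0) (μ : ℂ) (h0 : μ ≠ 0) (h1 : 1 - μ ≠ 0) (ρ : ℂ)
    (p1 p2 q1 q2 : ℂ → ℂ) (U V : Finset ℂ) (x : ℂ) (hU : x ∉ U) (hV : x ∉ V) (hd : Disjoint U V)
    (hG : Gn c (insert x (U ∪ V)))
    (hp1 : p1 x = ρ * (μ * (1 - μ)⁻¹) ^ 2 * q1 x) (hp2 : p2 x = ρ * (μ * (1 - μ)⁻¹) ^ 2 * q2 x) :
    GG c μ⁻¹ p1 p2 q1 q2 (insert x U) V =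
      ρ * (GG c μ⁻¹ p1 p2 q1 q2 U (insert x V)
        - (1 - μ)⁻¹ * ∑ a ∈ insert x V, q1 a * AA c x a (insert x V) *
            GG c μ⁻¹ p1 p2 q1 q2 U ((insert x V).erase a)
        - (1 - μ)⁻¹ * ∑ b ∈ insert x V, q2 b * DD c x b (insert x V) *
            GG c μ⁻¹ p1 p2 q1 q2 U ((insert x V).erase b)
        + (1 - μ)⁻¹ ^ 2 * ∑ b ∈ insert x V, q2 b * DD c x b (insert x V) *
            ∑ a ∈ (insert x V).erase b, q1 a * AA c x a ((insert x V).erase b) *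
              GG c μ⁻¹ p1 p2 q1 q2 U (((insert x V).erase b).erase a)) := by
  have hc' : -c ≠ 0 := neg_ne_zero.2 hc
  -- collect the right-hand side
  have R : (GG c μ⁻¹ p1 p2 q1 q2 U (insert x V)
        - (1 - μ)⁻¹ * ∑ a ∈ insert x V, q1 a * AA c x a (insert x V) *
            GG c μ⁻¹ p1 p2 q1 q2 U ((insert x V).erase a)
        - (1 - μ)⁻¹ * ∑ b ∈ insert x V, q2 b * DD c x b (insert x V) *
            GG c μ⁻¹ p1 p2 q1 q2 U ((insert x V).erase b)
        + (1 - μ)⁻¹ ^ 2 * ∑ b ∈ insert x V, q2 b * DD c x b (insert x V) *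
            ∑ a ∈ (insert x V).erase b, q1 a * AA c x a ((insert x V).erase b) *
              GG c μ⁻¹ p1 p2 q1 q2 U (((insert x V).erase b).erase a))
      = ∑ S ∈ U.powerset, (∏ a ∈ S, p2 a) * (∏ a ∈ U \ S, p1 a) * FF c S (U \ S) *
        JJ c q1 q2 (fun X => EE c μ⁻¹ (1 - μ)⁻¹ x X (U \ S))
          (fun X => EE (-c) μ⁻¹ (1 - μ)⁻¹ x X S) (insert x V) := by
    have e1 : ∀ (A : Finset ℂ) (w : ℂ → ℂ) (g : ℂ → Finset ℂ),
        ∑ a ∈ A, w a * GG c μ⁻¹ p1 p2 q1 q2 U (g a) = ∑ S ∈ U.powerset, (∏ a ∈ S, p2 a) *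
          (∏ a ∈ U \ S, p1 a) * FF c S (U \ S) * ∑ a ∈ A, w a *
            JJ c q1 q2 (fun X => Kz c μ⁻¹ X (U \ S)) (fun X => Kz (-c) μ⁻¹ X S) (g a) := by
      intro A w g
      simp only [GG, Finset.mul_sum]
      rw [Finset.sum_comm]
      refine Finset.sum_congr rfl fun S _ => Finset.sum_congr rfl fun a _ => ?_
      ring
    have e2 : ∀ (A : Finset ℂ) (w : ℂ → ℂ) (H : Finset ℂ → ℂ → ℂ),
        ∑ a ∈ A, w a * (∑ S ∈ U.powerset, (∏ a ∈ S, p2 a) *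
          (∏ a ∈ U \ S, p1 a) * FF c S (U \ S) * H S a) = ∑ S ∈ U.powerset, (∏ a ∈ S, p2 a) *
          (∏ a ∈ U \ S, p1 a) * FF c S (U \ S) * ∑ a ∈ A, w a * H S a := by
      intro A w H
      simp only [Finset.mul_sum]
      rw [Finset.sum_comm]
      refine Finset.sum_congr rfl fun S _ => Finset.sum_congr rfl fun a _ => ?_
      ring
    simp only [e1, e2]
    rw [GG]
    rw [Finset.mul_sum, Finset.mul_sum, Finset.mul_sum, ← Finset.sum_sub_distrib,
      ← Finset.sum_sub_distrib, ← Finset.sum_add_distrib]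
    refine Finset.sum_congr rfl fun S _ => ?_
    have := JJ_rec c x (1 - μ)⁻¹ q1 q2 (fun X => Kz c μ⁻¹ X (U \ S)) (fun X => Kz (-c) μ⁻¹ X S)
      (insert x V)
    simp only [EE_eq, neg_neg]
    rw [← this]
    ring
  rw [R, GG, Finset.sum_powerset_insert hU, ← Finset.sum_add_distrib, Finset.mul_sum]
  refine Finset.sum_congr rfl fun S hS => ?_
  rw [Finset.mem_powerset] at hS
  have hxS : x ∉ S := fun h => hU (hS h)
  have hxn : x ∉ U \ S := by simp [hU]
  have s1 : insert x U \ S = insert x (U \ S) := Finset.insert_sdiff_of_notMem _ hxS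
  have s2 : insert x U \ insert x S = U \ S := by
    rw [Finset.insert_sdiff_insert, Finset.sdiff_insert_of_notMem hU]
  rw [s1, s2, Finset.prod_insert hxn, Finset.prod_insert hxS, FF_insert_right hxn,
    FF_insert_left hxS, hp1, hp2]
  simp only [JJ]
  rw [Finset.sum_powerset_insert hV, Finset.mul_sum, Finset.mul_sum, ← Finset.sum_add_distrib,
    ← Finset.sum_add_distrib, Finset.mul_sum, Finset.mul_sum]
  refine Finset.sum_congr rfl fun T hT => ?_
  rw [Finset.mem_powerset] at hT
  have hxT : x ∉ T := fun h => hV (hT h)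
  have hxm : x ∉ V \ T := by simp [hV]
  have s3 : insert x V \ T = insert x (V \ T) := Finset.insert_sdiff_of_notMem _ hxT
  have s4 : insert x V \ insert x T = V \ T := by
    rw [Finset.insert_sdiff_insert, Finset.sdiff_insert_of_notMem hV]
  have d1 : Disjoint (V \ T) (U \ S) :=
    Finset.disjoint_of_subset_left Finset.sdiff_subset
      (Finset.disjoint_of_subset_right Finset.sdiff_subset hd.symm)
  have d2 : Disjoint T S :=
    Finset.disjoint_of_subset_left hT (Finset.disjoint_of_subset_right hS hd.symm)
  have g1 : Gn c (insert x ((V \ T) ∪ (U \ S))) := hG.mono (by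
    refine Finset.insert_subset_insert _ ?_
    rw [Finset.union_comm]
    exact Finset.union_subset_union Finset.sdiff_subset Finset.sdiff_subset)
  have g2 : Gn (-c) (insert x (T ∪ S)) := (hG.mono (by
    refine Finset.insert_subset_insert _ ?_
    rw [Finset.union_comm]
    exact Finset.union_subset_union hS hT)).neg
  have E1 := EE_mem c hc μ h0 h1 (V \ T) (U \ S) x hxm hxn d1 g1
  have E2 := EE_notMem c hc μ h0 h1 (V \ T) (U \ S) x hxm hxn d1 g1
  have E3 := EE_mem (-c) hc' μ h0 h1 T S x hxT hxS d2 g2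
  have E4 := EE_notMem (-c) hc' μ h0 h1 T S x hxT hxS d2 g2
  rw [FF_neg] at E3 E4
  rw [s3, s4, Finset.prod_insert hxm, Finset.prod_insert hxT, FF_insert_right hxT,
    FF_insert_left hxm, E1, E3]
  linear_combination (-(ρ * ((∏ a ∈ S, p2 a) * (∏ a ∈ U \ S, p1 a) * FF c S (U \ S) *
      ((∏ a ∈ T, q1 a) * (q2 x * ∏ a ∈ V \ T, q2 a) * FF c (V \ T) T *
        (-(μ * (1 - μ)⁻¹) * (FF c {x} (U \ S) * Kz c μ⁻¹ (V \ T) (U \ S))))))) * E4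
    + (-(ρ * ((∏ a ∈ S, p2 a) * (∏ a ∈ U \ S, p1 a) * FF c S (U \ S) *
      ((q1 x * ∏ a ∈ T, q1 a) * (∏ a ∈ V \ T, q2 a) * FF c (V \ T) T *
        (-(μ * (1 - μ)⁻¹) * (FF c S {x} * Kz (-c) μ⁻¹ T S)))))) * E2

lemma Kz_empty (c z : ℂ) (X : Finset ℂ) : Kz c z X ∅ = 1 := by simp [Kz]

lemma GG_unique (c : ℂ) (hc : c ≠ 0) (μ : ℂ) (h0 : μ ≠ 0) (h1 : 1 - μ ≠ 0) (ρ : ℂ)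
    (p1 p2 q1 q2 : ℂ → ℂ)
    (hp1 : ∀ x, p1 x = ρ * (μ * (1 - μ)⁻¹) ^ 2 * q1 x)
    (hp2 : ∀ x, p2 x = ρ * (μ * (1 - μ)⁻¹) ^ 2 * q2 x)
    (good : Finset ℂ → Prop) (hgood : ∀ W W', good W → W' ⊆ W → good W')
    (hgn : ∀ W, good W → Gn c W)
    (Φ : Finset ℂ → Finset ℂ → ℂ)
    (hΦ0 : ∀ V, good V → Φ ∅ V = GG c μ⁻¹ p1 p2 q1 q2 ∅ V)
    (hΦ : ∀ U V x, x ∉ U → x ∉ V → good (insert x V) → Φ (insert x U) V =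
      ρ * (Φ U (insert x V)
        - (1 - μ)⁻¹ * ∑ a ∈ insert x V, q1 a * AA c x a (insert x V) *
            Φ U ((insert x V).erase a)
        - (1 - μ)⁻¹ * ∑ b ∈ insert x V, q2 b * DD c x b (insert x V) *
            Φ U ((insert x V).erase b)
        + (1 - μ)⁻¹ ^ 2 * ∑ b ∈ insert x V, q2 b * DD c x b (insert x V) *
            ∑ a ∈ (insert x V).erase b, q1 a * AA c x a ((insert x V).erase b) *
              Φ U (((insert x V).erase b).erase a)))
    (U : Finset ℂ) : ∀ V, Disjoint U V → good (U ∪ V) →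
      Φ U V = GG c μ⁻¹ p1 p2 q1 q2 U V := by
  induction U using Finset.induction_on with
  | empty => intro V _ h; exact hΦ0 V (by simpa using h)
  | insert x U hx ih =>
    intro V hd hg
    rw [Finset.disjoint_insert_left] at hd
    have hsub : ∀ V', V' ⊆ insert x V → Φ U V' = GG c μ⁻¹ p1 p2 q1 q2 U V' := by
      intro V' hV'
      refine ih V' (Finset.disjoint_of_subset_right hV' (by simp [hx, hd.2])) (hgood _ _ hg ?_)
      intro a ha
      rcases Finset.mem_union.1 ha with h | h
      · simp [h]
      · have := Finset.mem_insert.1 (hV' h)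
        simp only [Finset.mem_union, Finset.mem_insert]; tauto
    rw [hΦ U V x hx hd.1 (hgood _ _ hg (by
        intro a ha; simp only [Finset.mem_union, Finset.mem_insert] at ha ⊢; tauto)),
      GG_rec c hc μ h0 h1 ρ p1 p2 q1 q2 U V x hx hd.1 hd.2
        (by rw [← Finset.insert_union]; exact hgn _ hg) (hp1 x) (hp2 x)]
    have er : ∀ a, (insert x V).erase a ⊆ insert x V := fun a => Finset.erase_subset _ _
    have err : ∀ a b, ((insert x V).erase a).erase b ⊆ insert x V := fun a b =>
      (Finset.erase_subset _ _).trans (Finset.erase_subset _ _)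
    rw [hsub _ (Finset.Subset.refl _)]
    simp only [hsub _ (er _), hsub _ (err _ _)]

/-! ### Determinant formula -/

lemma cauchy_fin (c : ℂ) (hc : c ≠ 0) : ∀ (n : ℕ) (y : Fin n → ℂ), Function.Injective y →
    (∀ i j, y i - y j + c ≠ 0) →
    Matrix.det (Matrix.of fun j k => (hC c (y j) (y k))⁻¹)
      = ∏ j, ∏ k, (if j = k then 1 else (fC c (y j) (y k))⁻¹) := by
  intro n
  induction n with
  | zero => intro y _ _; simp
  | succ n ih =>
    intro y hy hn
    have hsub : ∀ i : Fin n, y i.succ - y 0 ≠ 0 := fun i =>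
      sub_ne_zero.2 (fun h => Fin.succ_ne_zero i (hy h))
    have hsub' : ∀ i : Fin n, y 0 - y i.succ ≠ 0 := fun i =>
      sub_ne_zero.2 (fun h => Fin.succ_ne_zero i (hy h.symm))
    set M : Matrix (Fin (n + 1)) (Fin (n + 1)) ℂ := Matrix.of fun j k => (hC c (y j) (y k))⁻¹
      with hM
    let A : Matrix (Fin (n + 1)) (Fin (n + 1)) ℂ := Matrix.of fun j k =>
      M j k + (if j = 0 then 0 else - M j 0) * M 0 k
    have hdet : A.det = M.det :=
      Matrix.det_eq_of_forall_row_eq_smul_add_const (fun j => if j = 0 then 0 else - M j 0) 0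
        (by simp) (fun i j => rfl)
    have h00 : M 0 0 = 1 := by simp [hM, hC, hc]
    rw [← hdet, Matrix.det_succ_column_zero, Fin.sum_univ_succ]
    have hz : ∀ i : Fin n, A i.succ 0 = 0 := by
      intro i
      simp [A, h00]
    have h0 : A 0 0 = 1 := by simp [A, h00]
    simp only [hz, mul_zero, zero_mul, Finset.sum_const_zero, add_zero, h0, Fin.val_zero, pow_zero,
      one_mul]
    have hA : A.submatrix (Fin.succAbove 0) Fin.succ = Matrix.of fun j k : Fin n =>
        (fC c (y j.succ) (y 0))⁻¹ * (Matrix.of fun j k : Fin n =>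
          (fC c (y 0) (y k.succ))⁻¹ * (Matrix.of fun j k : Fin n =>
            (hC c (y j.succ) (y k.succ))⁻¹) j k) j k := by
      ext j k
      simp only [A, hM, Matrix.submatrix_apply, Matrix.of_apply, Fin.succAbove_zero,
        Fin.succ_ne_zero, if_false, hC, fC]
      have a1 := hn j.succ 0
      have a2 := hn 0 k.succ
      have a3 := hn j.succ k.succ
      have a4 := hsub j
      have a5 := hsub' k
      field_simp
      ring
    rw [hA, Matrix.det_mul_column, Matrix.det_mul_row,
      ih (fun i => y i.succ) (hy.comp (Fin.succ_injective n)) (fun i j => hn _ _)]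
    rw [Fin.prod_univ_succ, Fin.prod_univ_succ]
    simp only [Fin.prod_univ_succ (n := n), Fin.succ_ne_zero, (Fin.succ_ne_zero _).symm, if_true,
      if_false, one_mul, Fin.succ_inj]
    rw [Finset.prod_mul_distrib]
    ring

lemma cauchy_gen {κ : Type*} [Fintype κ] [DecidableEq κ] (c : ℂ) (hc : c ≠ 0) (y : κ → ℂ)
    (hy : Function.Injective y) (hn : ∀ i j, y i - y j + c ≠ 0) :
    Matrix.det (Matrix.of fun j k => (hC c (y j) (y k))⁻¹)
      = ∏ j, ∏ k, (if j = k then 1 else (fC c (y j) (y k))⁻¹) := by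
  let e := (Fintype.equivFin κ).symm
  have h := cauchy_fin c hc _ (y ∘ e) (hy.comp e.injective) (fun i j => hn _ _)
  rw [← Matrix.det_submatrix_equiv_self e, ← Equiv.prod_comp e]
  have h2 : ∀ j, ∏ k, (if e j = k then 1 else (fC c (y (e j)) (y k))⁻¹)
      = ∏ k, (if j = k then 1 else (fC c (y (e j)) (y (e k)))⁻¹) := by
    intro j
    rw [← Equiv.prod_comp e]
    simp
  simp only [h2]
  exact h

lemma det_expand {κ : Type*} [Fintype κ] [DecidableEq κ] (M : Matrix κ κ ℂ) (z : ℂ) :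
    (M + (-z) • (1 : Matrix κ κ ℂ)).det = ∑ s : Finset κ, (-z) ^ sᶜ.card *
      (M.submatrix (fun i : s => (i : κ)) (fun i : s => (i : κ))).det := by
  have h := (Matrix.detRowAlternating (n := κ) (R := ℂ)).map_add_univ M.row
    ((-z) • (1 : Matrix κ κ ℂ)).row
  refine Eq.trans h (Finset.sum_congr rfl fun s _ => ?_)
  rw [← Matrix.det_piecewise_one_eq_submatrix_det]
  have e : s.piecewise M.row ((-z) • (1 : Matrix κ κ ℂ)).row
      = fun i => (if i ∈ s then (1 : ℂ) else -z) •
        (s.piecewise M.row (1 : Matrix κ κ ℂ).row) i := by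
    funext i j
    by_cases hi : i ∈ s <;> simp [Finset.piecewise, hi, Matrix.row]
  rw [e]
  refine Eq.trans ((Matrix.detRowAlternating (n := κ) (R := ℂ)).map_smul_univ _ _) ?_
  rw [smul_eq_mul]
  congr 1
  rw [Finset.prod_ite]
  simp [Finset.filter_notMem_eq_sdiff, Finset.compl_eq_univ_sdiff]

lemma sum_powerset_image {κ M : Type*} [Fintype κ] [DecidableEq κ] [AddCommMonoid M] (y : κ → ℂ)
    (hy : Function.Injective y) (F : Finset ℂ → M) :
    ∑ S ∈ (Finset.univ.image y).powerset, F S = ∑ s : Finset κ, F (s.image y) := by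
  rw [Finset.powerset_image, Finset.sum_image]
  · simp
  · intro a _ b _ h
    exact Finset.image_injective hy h

lemma image_sdiff_compl {κ : Type*} [Fintype κ] [DecidableEq κ] (y : κ → ℂ)
    (hy : Function.Injective y) (s : Finset κ) :
    Finset.univ.image y \ s.image y = sᶜ.image y := by
  rw [← Finset.image_sdiff _ _ hy, Finset.compl_eq_univ_sdiff]

lemma FF_image {ι κ : Type*} [DecidableEq ι] [DecidableEq κ] (c : ℂ) (x : ι → ℂ) (y : κ → ℂ)
    (hx : Function.Injective x) (hy : Function.Injective y) (s : Finset ι) (t : Finset κ) :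
    FF c (s.image x) (t.image y) = ∏ i ∈ s, ∏ j ∈ t, fC c (x i) (y j) := by
  rw [FF, Finset.prod_image (fun a _ b _ h => hx h)]
  refine Finset.prod_congr rfl fun i _ => ?_
  rw [Finset.prod_image (fun a _ b _ h => hy h)]

lemma KIz_eq {ι κ : Type*} [Fintype ι] [DecidableEq ι] [Fintype κ] [DecidableEq κ] (c z : ℂ)
    (hc : c ≠ 0) (x : ι → ℂ) (y : κ → ℂ) (hx : Function.Injective x) (hy : Function.Injective y)
    (hn : ∀ i j, y i - y j + c ≠ 0) :
    KIz c z x y = Kz c z (Finset.univ.image x) (Finset.univ.image y) := by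
  set d : κ → ℂ := fun j => (∏ i, fC c (x i) (y j)) *
    (∏ i ∈ Finset.univ.erase j, fC c (y j) (y i)) with hd
  have e1 : KIz c z x y = ((Matrix.of fun j k => d j * (hC c (y j) (y k))⁻¹)
      + (-z) • (1 : Matrix κ κ ℂ)).det := by
    rw [KIz]
    congr 1
    ext j k
    simp only [Matrix.of_apply, Matrix.add_apply, Matrix.smul_apply, Matrix.one_apply, smul_eq_mul,
      hd, div_eq_mul_inv]
    ring
  rw [e1, det_expand, Kz, sum_powerset_image y hy]
  refine Finset.sum_congr rfl fun s _ => ?_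
  rw [image_sdiff_compl y hy, Finset.card_image_of_injective _ hy, FF_image c y y hy hy,
    FF_image c x y hx hy, mul_assoc]
  congr 1
  have e2 : ((Matrix.of fun j k => d j * (hC c (y j) (y k))⁻¹).submatrix
      (fun i : s => (i : κ)) (fun i : s => (i : κ)))
      = Matrix.of fun j k : s => d j * (Matrix.of fun j k : s =>
        (hC c (y j) (y k))⁻¹) j k := rfl
  rw [e2, Matrix.det_mul_column, cauchy_gen c hc (fun i : s => y i)
    (hy.comp Subtype.val_injective) (fun i j => hn _ _), ← Finset.prod_mul_distrib]
  rw [Finset.prod_comm (s := Finset.univ) (t := s), ← Finset.prod_mul_distrib,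
    ← Finset.prod_coe_sort s]
  refine Finset.prod_congr rfl fun j _ => ?_
  have e3 : ∏ k : s, (if j = k then 1 else (fC c (y j) (y k))⁻¹)
      = (∏ k ∈ s.erase j, fC c (y j) (y k))⁻¹ := by
    rw [← Finset.prod_inv_distrib, ← Finset.mul_prod_erase Finset.univ _ (Finset.mem_univ j)]
    simp only [if_true, one_mul]
    refine Finset.prod_bij' (fun k _ => (k : κ)) (fun k hk => ⟨k, Finset.mem_of_mem_erase hk⟩)
      ?_ ?_ ?_ ?_ ?_
    · intro k hk
      have := Finset.ne_of_mem_erase hk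
      simp only [Finset.mem_erase, Finset.coe_mem, and_true]
      exact fun h => this (Subtype.ext h)
    · intro k hk
      have := Finset.ne_of_mem_erase hk
      simp only [Finset.mem_erase, Finset.mem_univ, and_true]
      exact fun h => this (congrArg Subtype.val h)
    · intro k _; rfl
    · intro k _; rfl
    · intro k hk
      rw [if_neg (Finset.ne_of_mem_erase hk).symm]
  have e4 : ∏ i ∈ Finset.univ.erase (j : κ), fC c (y j) (y i)
      = (∏ k ∈ s.erase j, fC c (y j) (y k)) * ∏ k ∈ sᶜ, fC c (y j) (y k) := by
    have hu : Finset.univ.erase (j : κ) = s.erase j ∪ sᶜ := by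
      ext k
      simp only [Finset.mem_erase, Finset.mem_univ, and_true, Finset.mem_union, Finset.mem_compl]
      by_cases h : k = j
      · simp [h]
      · simp only [ne_eq, h, not_false_eq_true, true_and, true_iff]; tauto
    rw [hu, Finset.prod_union]
    exact Finset.disjoint_of_subset_left (Finset.erase_subset _ _) disjoint_compl_right
  have e5 : (∏ k ∈ s.erase j, fC c (y j) (y k)) ≠ 0 := by
    refine Finset.prod_ne_zero_iff.2 fun k hk => div_ne_zero (hn _ _) (sub_ne_zero.2 ?_)
    exact fun h => Finset.ne_of_mem_erase hk (hy h).symm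
  rw [e3]
  simp only [hd]
  rw [e4]
  field_simp

lemma image_restr {p : ℕ} (w : Fin p → ℂ) (s : Finset (Fin p)) :
    Finset.univ.image (restr w s) = s.image w := by
  ext a
  simp [restr]

lemma KIz_restr {n m : ℕ} (c z : ℂ) (hc : c ≠ 0) (u : Fin n → ℂ) (v : Fin m → ℂ)
    (hu : Function.Injective u) (hv : Function.Injective v)
    (hn : ∀ i j, u i - u j + c ≠ 0) (s : Finset (Fin n)) (t : Finset (Fin m)) :
    KIz c z (restr v t) (restr u s) = Kz c z (t.image v) (s.image u) := by
  rw [KIz_eq c z hc (restr v t) (restr u s) (hv.comp Subtype.val_injective) (hu.comp Subtype.val_injective)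
    (fun i j => hn _ _), image_restr, image_restr]

/-! ### Assembly -/

/-- product of commuting operators over a finite set -/
def Bp {V : Type*} [AddCommGroup V] [Module ℂ V] (op : ℂ → Module.End ℂ V) (W : Finset ℂ) :
    Module.End ℂ V := (W.toList.map op).prod

lemma map_perm_prod {V : Type*} [AddCommGroup V] [Module ℂ V] (op : ℂ → Module.End ℂ V)
    (h : ∀ x y, op x * op y = op y * op x) {l l' : List ℂ} (hp : l.Perm l') :
    (l.map op).prod = (l'.map op).prod := by
  induction hp with
  | nil => rfl
  | cons x _ ih => simp [ih]
  | swap x y l => simp only [List.map_cons, List.prod_cons, ← mul_assoc, h x y]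
  | trans _ _ ih1 ih2 => rw [ih1, ih2]

lemma Bp_insert {V : Type*} [AddCommGroup V] [Module ℂ V] (op : ℂ → Module.End ℂ V)
    (h : ∀ x y, op x * op y = op y * op x) (a : ℂ) (W : Finset ℂ) (ha : a ∉ W) :
    Bp op (insert a W) = op a * Bp op W := by
  rw [Bp, map_perm_prod op h (Finset.toList_insert ha), List.map_cons, List.prod_cons, Bp]

lemma Bp_insert' {V : Type*} [AddCommGroup V] [Module ℂ V] (op : ℂ → Module.End ℂ V)
    (h : ∀ x y, op x * op y = op y * op x) (a : ℂ) (W : Finset ℂ) (ha : a ∉ W) :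
    Bp op (insert a W) = Bp op W * op a := by
  rw [Bp, map_perm_prod op h ((Finset.toList_insert ha).trans
    (List.perm_append_singleton a W.toList).symm), List.map_append, List.prod_append, Bp]
  simp

lemma opProd_eq {V : Type*} [AddCommGroup V] [Module ℂ V] (op : ℂ → Module.End ℂ V)
    (h : ∀ x y, op x * op y = op y * op x) {p : ℕ} (w : Fin p → ℂ) (hw : Function.Injective w) :
    opProd op w Finset.univ = Bp op (Finset.univ.image w) := by
  have e : ((Finset.univ : Finset (Fin p)).sort (· ≤ ·)).map (fun i => op (w i))
      = (((Finset.univ : Finset (Fin p)).sort (· ≤ ·)).map w).map op := by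
    rw [List.map_map]; rfl
  rw [opProd, e, Bp]
  apply map_perm_prod op h
  rw [List.perm_ext_iff_of_nodup ((Finset.sort_nodup _ _).map hw) (Finset.nodup_toList _)]
  intro a
  simp

/-- pairwise genericity of a finite set -/
def GoodSet (c : ℂ) (W : Finset ℂ) : Prop :=
  ∀ a ∈ W, ∀ b ∈ W, a ≠ b → a - b ≠ 0 ∧ a - b ≠ c ∧ a - b ≠ -c ∧ a - b ≠ 2 * c ∧ a - b ≠ -2 * c

lemma GoodSet.gn {c : ℂ} (hc : c ≠ 0) {W : Finset ℂ} (h : GoodSet c W) : Gn c W := by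
  intro a ha b hb
  by_cases e : a = b
  · rw [e, sub_self]; exact hc.symm
  · exact (h a ha b hb e).2.1

lemma nu21_act {V : Type*} [AddCommGroup V] [Module ℂ V] (c : ℂ) (hc : c ≠ 0) (β1 β2 : ℂ)
    (N : Fin 2 → Fin 2 → ℂ → Module.End ℂ V)
    (vac : V) (lam1 lam2 : ℂ → ℂ)
    (hYang : ∀ (i j k l : Fin 2) (x y : ℂ), x ≠ y →
      N i j x * N k l y - N k l y * N i j x
        = gC c x y • (N k j y * N i l x - N k j x * N i l y))
    (hCommSame : ∀ (i j : Fin 2) (x y : ℂ), N i j x * N i j y = N i j y * N i j x)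
    (hvac11 : ∀ x : ℂ, N 0 0 x vac = lam1 x • vac + β2 • (N 0 1 x vac))
    (hvac22 : ∀ x : ℂ, N 1 1 x vac = lam2 x • vac + β1 • (N 0 1 x vac))
    (hvac21 : ∀ x : ℂ, N 1 0 x vac
      = (β1 * lam1 x + β2 * lam2 x) • vac + (β1 * β2) • (N 0 1 x vac))
    (B : Finset ℂ → V) (hB0 : B ∅ = vac)
    (hB : ∀ a W, a ∉ W → B (insert a W) = N 0 1 a (B W))
    (v : Finset ℂ) (x : ℂ) (hx : x ∉ v) (hG : Gn c (insert x v)) :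
    N 1 0 x (B v) = (β1 * β2) • B (insert x v)
      + β1 • ∑ a ∈ insert x v, (lam1 a * AA c x a (insert x v)) • B ((insert x v).erase a)
      + β2 • ∑ b ∈ insert x v, (lam2 b * DD c x b (insert x v)) • B ((insert x v).erase b)
      + ∑ b ∈ insert x v, ∑ a ∈ (insert x v).erase b,
        (lam2 b * lam1 a * (DD c x b (insert x v) * AA c x a ((insert x v).erase b))) •
          B (((insert x v).erase b).erase a) := by
  have hY : ∀ (i j k l : Fin 2) (x y : ℂ) (w : V), x ≠ y →
      N i j x (N k l y w) - N k l y (N i j x w)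
        = gC c x y • (N k j y (N i l x w) - N k j x (N i l y w)) := by
    intro i j k l x y w h
    have := LinearMap.congr_fun (hYang i j k l x y h) w
    simpa using this
  have hS : ∀ (x y : ℂ) (w : V), N 0 1 x (N 0 1 y w) = N 0 1 y (N 0 1 x w) := by
    intro x y w
    have := LinearMap.congr_fun (hCommSame 0 1 x y) w
    simpa using this
  have gneg : ∀ x y : ℂ, gC c y x = - gC c x y := by
    intro x y
    rw [gC, gC, ← neg_sub x y, div_neg]
  have fg : ∀ x y : ℂ, x ≠ y → fC c x y = 1 + gC c x y := fun x y h => fC_eq h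
  set t11 : ℂ → Module.End ℂ V := fun x => N 0 0 x - β2 • N 0 1 x with ht11
  set t22 : ℂ → Module.End ℂ V := fun x => N 1 1 x - β1 • N 0 1 x with ht22
  set t21 : ℂ → Module.End ℂ V := fun x => N 1 0 x - β1 • N 0 0 x - β2 • N 1 1 x
    + (β1 * β2) • N 0 1 x with ht21
  have R11 : ∀ x y w, x ≠ y → t11 x (N 0 1 y w) = fC c y x • N 0 1 y (t11 x w)
      + gC c x y • N 0 1 x (t11 y w) := by
    intro x y w h
    have h1 := hY 0 1 0 0 y x w h.symm
    have h2 := hS x y w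
    simp only [ht11, LinearMap.sub_apply, LinearMap.smul_apply, map_sub, map_smul]
    rw [fg y x h.symm, h2]
    rw [gneg x y] at h1 ⊢
    linear_combination (norm := module) (-1 : ℂ) • h1
  have R22 : ∀ x y w, x ≠ y → t22 x (N 0 1 y w) = fC (-c) y x • N 0 1 y (t22 x w)
      + gC (-c) x y • N 0 1 x (t22 y w) := by
    intro x y w h
    have h1 := hY 1 1 0 1 x y w h
    have h2 := hS x y w
    have h3 : gC (-c) x y = - gC c x y := by rw [gC, gC, neg_div]
    simp only [ht22, LinearMap.sub_apply, LinearMap.smul_apply, map_sub, map_smul]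
    rw [fC_neg, fg x y h, h2, h3]
    linear_combination (norm := module) (1 : ℂ) • h1
  have R21 : ∀ x y w, x ≠ y → t21 x (N 0 1 y w) = N 0 1 y (t21 x w)
      + gC c x y • (t11 y (t22 x w) - t11 x (t22 y w)) := by
    intro x y w h
    have h1 := hY 1 0 0 1 x y w h
    have h2 := hY 0 0 0 1 x y w h
    have h3 := hY 1 1 0 1 x y w h
    have h4 := hS x y w
    simp only [ht11, ht22, ht21, LinearMap.sub_apply, LinearMap.add_apply, LinearMap.smul_apply,
      map_sub, map_add, map_smul]
    rw [h4]
    linear_combination (norm := module) (1 : ℂ) • h1 - β1 • h2 - β2 • h3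
  have a11 := act11 c hc t11 (N 0 1) lam1 B hB (by
    intro x
    rw [hB0]
    simp only [ht11, LinearMap.sub_apply, LinearMap.smul_apply, hvac11]
    module) R11
  have a22 : ∀ v x, x ∉ v → Gn c (insert x v) →
      t22 x (B v) = ∑ a ∈ insert x v, (lam2 a * DD c x a (insert x v)) •
        B ((insert x v).erase a) := by
    intro v x hx hG
    have := act11 (-c) (neg_ne_zero.2 hc) t22 (N 0 1) lam2 B hB (by
      intro x
      rw [hB0]
      simp only [ht22, LinearMap.sub_apply, LinearMap.smul_apply, hvac22]
      module) R22 v x hx hG.neg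
    simpa only [AA_neg] using this
  have a21 := act21 c hc t11 t22 t21 (N 0 1) lam1 lam2 B hB (by
    intro x
    rw [hB0]
    simp only [ht21, LinearMap.sub_apply, LinearMap.add_apply, LinearMap.smul_apply, hvac11,
      hvac22, hvac21]
    module) R21 a11 a22 v x hx hG
  rw [← a21, ← a11 v x hx hG, ← a22 v x hx hG, hB x v hx]
  simp only [ht11, ht22, ht21, LinearMap.sub_apply, LinearMap.add_apply, LinearMap.smul_apply]
  module

lemma base_eq {V : Type*} [AddCommGroup V] [Module ℂ V] (c : ℂ)
    (β1 β2 μ : ℂ) (p1 p2 : ℂ → ℂ)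
    (B : ℂ → Module.End ℂ V) (hcomm : ∀ x y, B x * B y = B y * B x)
    (vac : V) (lam1 lam2 : ℂ → ℂ) (vacDual : V →ₗ[ℂ] ℂ)
    (hAvg : ∀ (p : ℕ) (w : Fin p → ℂ), Generic c w →
      vacDual (opProd B w Finset.univ vac)
        = (1 - μ) ^ p * ∑ s : Finset (Fin p),
            (-β1) ^ (-(s.card : ℤ)) * (-β2) ^ (-(sᶜ.card : ℤ)) *
              (∏ i ∈ s, lam2 (w i)) * (∏ i ∈ sᶜ, lam1 (w i)) * fSS c w s sᶜ)
    (W : Finset ℂ) (hW : GoodSet c W) (z : ℂ) :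
    vacDual (Bp B W vac) = GG c z p1 p2 (fun a => (1 - μ) * (-β2)⁻¹ * lam1 a)
      (fun a => (1 - μ) * (-β1)⁻¹ * lam2 a) ∅ W := by
  set w : Fin W.card → ℂ := fun i => (W.equivFin.symm i : ℂ) with hw
  have hinj : Function.Injective w := Subtype.val_injective.comp W.equivFin.symm.injective
  have him : Finset.univ.image w = W := by
    ext a
    simp only [Finset.mem_image, Finset.mem_univ, true_and, hw]
    constructor
    · rintro ⟨i, rfl⟩; exact (W.equivFin.symm i).2
    · intro ha; exact ⟨W.equivFin ⟨a, ha⟩, by simp⟩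
  have hgenw : Generic c w := by
    intro i j hij
    exact hW _ (W.equivFin.symm i).2 _ (W.equivFin.symm j).2 (fun e => hij (hinj e))
  have h := hAvg W.card w hgenw
  rw [opProd_eq B hcomm w hinj, him] at h
  rw [h]
  have e1 : ∀ q1 q2 : ℂ → ℂ, GG c z p1 p2 q1 q2 ∅ W
      = ∑ T ∈ W.powerset, (∏ a ∈ T, q2 a) * (∏ a ∈ W \ T, q1 a) * FF c T (W \ T) := by
    intro q1 q2
    simp only [GG, Finset.powerset_empty, Finset.sum_singleton, Finset.prod_empty,
      Finset.empty_sdiff, FF_empty_left, Kz_empty, one_mul]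
    rw [JJ_symm]
    simp only [JJ, FF_neg, mul_one]
  have e4 : ∀ F : Finset ℂ → ℂ, ∑ T ∈ W.powerset, F T = ∑ s : Finset (Fin W.card),
      F (s.image w) := fun F => by rw [← sum_powerset_image w hinj, him]
  rw [e1, e4, Finset.mul_sum]
  refine Finset.sum_congr rfl fun s _ => ?_
  have e2 : W \ s.image w = sᶜ.image w :=
    (congrArg (fun Y => Y \ s.image w) him.symm).trans (image_sdiff_compl w hinj s)
  rw [e2, FF_image c w w hinj hinj, Finset.prod_image (fun a _ b _ h => hinj h),
    Finset.prod_image (fun a _ b _ h => hinj h), fSS]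
  simp only [Finset.prod_mul_distrib, Finset.prod_const]
  have e3 : W.card = s.card + sᶜ.card := by rw [Finset.card_add_card_compl]; simp
  rw [zpow_neg, zpow_neg, zpow_natCast, zpow_natCast, inv_pow, inv_pow]
  have e5 : (1 - μ) ^ W.card = (1 - μ) ^ s.card * (1 - μ) ^ sᶜ.card := by
    rw [← pow_add, ← e3]
  rw [e5]
  ring
/-- Modified Izergin--Korepin formula for the scalar product of modified Bethe vectors. -/
theorem stmt7
    (c : ℂ) (hc : c ≠ 0) (β1 β2 μ : ℂ) (hβ1 : β1 ≠ 0) (hβ2 : β2 ≠ 0)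
    (hμ0 : μ ≠ 0) (hμ1 : μ ≠ 1)
    (V : Type*) [AddCommGroup V] [Module ℂ V]
    (N : Fin 2 → Fin 2 → ℂ → Module.End ℂ V)
    (vac : V) (lam1 lam2 : ℂ → ℂ) (vacDual : V →ₗ[ℂ] ℂ)
    (hYang : ∀ (i j k l : Fin 2) (x y : ℂ), x ≠ y →
      N i j x * N k l y - N k l y * N i j x
        = gC c x y • (N k j y * N i l x - N k j x * N i l y))
    (hCommSame : ∀ (i j : Fin 2) (x y : ℂ), N i j x * N i j y = N i j y * N i j x)
    (hvac11 : ∀ x : ℂ, N 0 0 x vac = lam1 x • vac + β2 • (N 0 1 x vac))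
    (hvac22 : ∀ x : ℂ, N 1 1 x vac = lam2 x • vac + β1 • (N 0 1 x vac))
    (hvac21 : ∀ x : ℂ, N 1 0 x vac
      = (β1 * lam1 x + β2 * lam2 x) • vac + (β1 * β2) • (N 0 1 x vac))
    (hnorm : vacDual vac = 1)
    (hAvg : ∀ (p : ℕ) (w : Fin p → ℂ), Generic c w →
      vacDual (opProd (N 0 1) w Finset.univ vac)
        = (1 - μ) ^ p * ∑ s : Finset (Fin p),
            (-β1) ^ (-(s.card : ℤ)) * (-β2) ^ (-(sᶜ.card : ℤ)) *
              (∏ i ∈ s, lam2 (w i)) * (∏ i ∈ sᶜ, lam1 (w i)) * fSS c w s sᶜ)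
    (n m : ℕ) (u : Fin n → ℂ) (v : Fin m → ℂ)
    (hgen : Generic c (Fin.append u v)) :
    vacDual ((opProd (N 1 0) u Finset.univ * opProd (N 0 1) v Finset.univ) vac)
      = μ ^ (2 * n) * (1 - μ) ^ ((m : ℤ) - (n : ℤ)) *
          ∑ sU : Finset (Fin n), ∑ sV : Finset (Fin m),
            (-β1) ^ ((sUᶜ.card : ℤ) - (sVᶜ.card : ℤ)) *
              (-β2) ^ ((sU.card : ℤ) - (sV.card : ℤ)) *
              (∏ i ∈ sU, lam2 (u i)) * (∏ j ∈ sVᶜ, lam2 (v j)) *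
              (∏ i ∈ sUᶜ, lam1 (u i)) * (∏ j ∈ sV, lam1 (v j)) *
              fSS c u sU sUᶜ * fSS c v sVᶜ sV *
              KIz c μ⁻¹ (restr v sVᶜ) (restr u sUᶜ) *
              KIzBar c μ⁻¹ (restr v sV) (restr u sU) := by
  have h1 : (1 - μ) ≠ 0 := sub_ne_zero.2 hμ1.symm
  have hainj : Function.Injective (Fin.append u v) := by
    intro i j e
    by_contra hij
    exact (hgen i j hij).1 (sub_eq_zero.2 e)
  have hu : Function.Injective u := by
    intro i j e
    have := @hainj (Fin.castAdd m i) (Fin.castAdd m j) (by simpa using e)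
    exact Fin.castAdd_injective n m this
  have hv : Function.Injective v := by
    intro i j e
    have := @hainj (Fin.natAdd n i) (Fin.natAdd n j) (by simpa using e)
    exact Fin.natAdd_injective m n this
  have hmem : ∀ a, a ∈ Finset.univ.image u ∪ Finset.univ.image v → ∃ i, Fin.append u v i = a := by
    intro a ha
    simp only [Finset.mem_union, Finset.mem_image, Finset.mem_univ, true_and] at ha
    rcases ha with ⟨i, rfl⟩ | ⟨i, rfl⟩
    · exact ⟨Fin.castAdd m i, by simp⟩
    · exact ⟨Fin.natAdd n i, by simp⟩
  have hgood : GoodSet c (Finset.univ.image u ∪ Finset.univ.image v) := by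
    intro a ha b hb hab
    obtain ⟨i, rfl⟩ := hmem a ha
    obtain ⟨j, rfl⟩ := hmem b hb
    exact hgen i j (fun e => hab (by rw [e]))
  have hdisj : Disjoint (Finset.univ.image u) (Finset.univ.image v) := by
    rw [Finset.disjoint_left]
    intro a ha hb
    simp only [Finset.mem_image, Finset.mem_univ, true_and] at ha hb
    obtain ⟨i, rfl⟩ := ha
    obtain ⟨j, hj⟩ := hb
    have := @hainj (Fin.castAdd m i) (Fin.natAdd n j) (by simpa using hj.symm)
    have h2 := congrArg Fin.val this
    simp only [Fin.val_castAdd, Fin.val_natAdd] at h2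
    have := i.2
    omega
  have hGn := hgood.gn hc
  have hnu : ∀ i j, u i - u j + c ≠ 0 := fun i j =>
    hGn.add_ne (by simp) (by simp)
  have hnu' : ∀ i j, u i - u j + (-c) ≠ 0 := fun i j =>
    hGn.neg.add_ne (by simp) (by simp)
  rw [opProd_eq _ (hCommSame 1 0) u hu, opProd_eq _ (hCommSame 0 1) v hv]
  have key := GG_unique c hc μ hμ0 h1 (β1 * β2)
    (fun a => μ ^ 2 * (1 - μ)⁻¹ * (-β1) * lam1 a) (fun a => μ ^ 2 * (1 - μ)⁻¹ * (-β2) * lam2 a)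
    (fun a => (1 - μ) * (-β2)⁻¹ * lam1 a) (fun a => (1 - μ) * (-β1)⁻¹ * lam2 a)
    (by intro x; field_simp) (by intro x; field_simp)
    (GoodSet c) (fun W W' h hs a ha b hb => h a (hs ha) b (hs hb)) (fun W h => h.gn hc)
    (fun U W => vacDual ((Bp (N 1 0) U * Bp (N 0 1) W) vac))
    (by
      intro W hW
      have h0 : Bp (N 1 0) ∅ = 1 := by simp [Bp]
      simp only [h0, one_mul]
      exact base_eq c β1 β2 μ _ _ (N 0 1) (hCommSame 0 1) vac lam1 lam2 vacDual hAvg W hW _)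
    (by
      intro U W x hxU hxW hG
      have h := nu21_act c hc β1 β2 N vac lam1 lam2 hYang hCommSame hvac11 hvac22 hvac21
        (fun W => Bp (N 0 1) W vac) (by simp [Bp])
        (fun a W ha => by simp only [Bp_insert _ (hCommSame 0 1) a W ha, Module.End.mul_apply])
        W x hxW (hG.gn hc)
      simp only [Bp_insert' _ (hCommSame 1 0) x U hxU, Module.End.mul_apply]
      rw [h]
      simp only [map_add, map_smul, map_sum, smul_eq_mul]
      simp only [mul_add, Finset.mul_sum, sub_eq_add_neg, ← Finset.sum_neg_distrib]
      have h1' : 1 + -μ ≠ 0 := by rw [← sub_eq_add_neg]; exact h1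
      congr 1
      · congr 1
        · congr 1
          refine Finset.sum_congr rfl fun a _ => ?_
          field_simp
        · refine Finset.sum_congr rfl fun a _ => ?_
          field_simp
      · refine Finset.sum_congr rfl fun b _ => Finset.sum_congr rfl fun a _ => ?_
        field_simp)
    (Finset.univ.image u) (Finset.univ.image v) hdisj hgood
  refine key.trans ?_
  rw [GG, sum_powerset_image u hu, Finset.mul_sum]
  refine Finset.sum_congr rfl fun sU _ => ?_
  rw [JJ, sum_powerset_image v hv, Finset.mul_sum, Finset.mul_sum]
  refine Finset.sum_congr rfl fun sV _ => ?_
  rw [image_sdiff_compl u hu, image_sdiff_compl v hv, KIzBar,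
    KIz_restr c _ hc u v hu hv hnu, KIz_restr (-c) _ (neg_ne_zero.2 hc) u v hu hv hnu',
    FF_image c u u hu hu, FF_image c v v hv hv,
    Finset.prod_image (fun a _ b _ h => hu h), Finset.prod_image (fun a _ b _ h => hu h),
    Finset.prod_image (fun a _ b _ h => hv h), Finset.prod_image (fun a _ b _ h => hv h),
    fSS, fSS]
  simp only [Finset.prod_mul_distrib, Finset.prod_const]
  have en : n = sU.card + sUᶜ.card := by rw [Finset.card_add_card_compl]; simp
  have em : m = sV.card + sVᶜ.card := by rw [Finset.card_add_card_compl]; simp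
  have e5 : μ ^ (2 * n) = (μ ^ 2) ^ sU.card * (μ ^ 2) ^ sUᶜ.card := by
    rw [← pow_add, ← en, pow_mul]
  have e6 : (1 - μ) ^ ((m : ℤ) - (n : ℤ)) = (1 - μ) ^ sV.card * (1 - μ) ^ sVᶜ.card *
      ((1 - μ)⁻¹ ^ sU.card * (1 - μ)⁻¹ ^ sUᶜ.card) := by
    rw [← pow_add, ← pow_add, ← en, ← em, zpow_sub₀ h1, zpow_natCast, zpow_natCast, inv_pow,
      div_eq_mul_inv]
  rw [e5, e6, zpow_sub₀ (neg_ne_zero.2 hβ1), zpow_sub₀ (neg_ne_zero.2 hβ2)]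
  simp only [zpow_natCast, div_eq_mul_inv, ← inv_pow]
  ring
end
end

section
/- If n < m, then for all generic tuples ū of length n and v̄ of length m one has K^{(1)}_{n,m}(ū | v̄) = 0 and \bar{K}^{(1)}_{n,m}(ū | v̄) = 0. -/
open scoped BigOperators

noncomputable section

open Polynomial in
theorem KIz_one_eq_zero (c : ℂ) (hc : c ≠ 0) (n m : ℕ) (hnm : n < m)
    (u : Fin n → ℂ) (v : Fin m → ℂ)
    (h1 : ∀ i j, i ≠ j → v i - v j ≠ 0) (h2 : ∀ i j, v i - v j + c ≠ 0)
    (h3 : ∀ i j, u i - v j ≠ 0) (h4 : ∀ i j, v j - (u i + c) ≠ 0) :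
    KIz c 1 u v = 0 := by
  unfold KIz
  rw [← Matrix.exists_mulVec_eq_zero_iff]
  set N : ℂ[X] := ∏ i, (X - C (u i + c)) with hN
  have hNe : ∀ t, N.eval t = ∏ i, (t - (u i + c)) := by
    intro t
    simp [hN, eval_prod]
  have hdeg : N.degree < (Finset.univ : Finset (Fin m)).card := by
    rw [hN, degree_prod]
    simp only [degree_X_sub_C]
    simpa using hnm
  have hinj : Set.InjOn v (Finset.univ : Finset (Fin m)) := by
    intro a _ b _ hab
    by_contra hne
    exact h1 a b hne (sub_eq_zero.2 hab)
  have hNint := Lagrange.eq_interpolate hinj hdeg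
  refine ⟨fun k => Lagrange.nodalWeight Finset.univ v k * N.eval (v k), ?_, ?_⟩
  · intro h
    have h0 := congrFun h ⟨0, by omega⟩
    simp only [Pi.zero_apply, mul_eq_zero] at h0
    rcases h0 with h0 | h0
    · exact Lagrange.nodalWeight_ne_zero hinj (Finset.mem_univ _) h0
    · rw [hNe, Finset.prod_eq_zero_iff] at h0
      obtain ⟨i, _, hi⟩ := h0
      exact h4 _ _ hi
  · funext j
    have hev : N.eval (v j + c) = (∏ i, (v j + c - v i)) *
        ∑ k, Lagrange.nodalWeight Finset.univ v k * (v j + c - v k)⁻¹ * N.eval (v k) := by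
      have := Lagrange.eval_interpolate_not_at_node (s := Finset.univ) (v := v)
        (fun i => N.eval (v i)) (x := v j + c)
        (fun i _ hi => h2 j i (by rw [← sub_eq_zero] at hi; rw [← hi]; ring))
      rw [← hNint, Lagrange.eval_nodal] at this
      exact this
    rw [← Finset.mul_prod_erase _ _ (Finset.mem_univ j)] at hev
    set S := ∑ k, Lagrange.nodalWeight Finset.univ v k * (v j + c - v k)⁻¹ * N.eval (v k) with hS
    have hf : (∏ i, fC c (u i) (v j)) * N.eval (v j + c) = N.eval (v j) := by
      rw [hNe, hNe, ← Finset.prod_mul_distrib]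
      refine Finset.prod_congr rfl fun i _ => ?_
      have := h3 i j
      unfold fC
      field_simp
      ring
    have hg : (∏ i ∈ Finset.univ.erase j, fC c (v j) (v i)) =
        Lagrange.nodalWeight Finset.univ v j * ∏ i ∈ Finset.univ.erase j, (v j + c - v i) := by
      rw [Lagrange.nodalWeight, ← Finset.prod_mul_distrib]
      refine Finset.prod_congr rfl fun i _ => ?_
      unfold fC
      rw [div_eq_mul_inv]
      ring
    simp only [Matrix.mulVec, dotProduct, Matrix.of_apply, Pi.zero_apply, add_mul,
      Finset.sum_add_distrib]
    have e1 : ∑ k, (-1 * (if j = k then (1 : ℂ) else 0)) *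
        (Lagrange.nodalWeight Finset.univ v k * N.eval (v k)) =
        - (Lagrange.nodalWeight Finset.univ v j * N.eval (v j)) := by
      simp
    have e2 : ∑ k, (∏ i, fC c (u i) (v j)) * (∏ i ∈ Finset.univ.erase j, fC c (v j) (v i))
        / hC c (v j) (v k) * (Lagrange.nodalWeight Finset.univ v k * N.eval (v k)) =
        (∏ i, fC c (u i) (v j)) * (∏ i ∈ Finset.univ.erase j, fC c (v j) (v i)) * (c * S) := by
      rw [hS, Finset.mul_sum, Finset.mul_sum]
      refine Finset.sum_congr rfl fun k _ => ?_
      have : v j + c - v k = v j - v k + c := by ring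
      rw [hC, this, div_div_eq_mul_div, div_eq_mul_inv]
      ring
    rw [e1, e2, ← hf, hev, hg]
    ring

/-- `K^{(1)}_{n,m}(ū|v̄) = 0` and `K̄^{(1)}_{n,m}(ū|v̄) = 0` whenever `n < m`. -/
theorem stmt9
    (c : ℂ) (hc : c ≠ 0) (n m : ℕ) (hnm : n < m)
    (u : Fin n → ℂ) (v : Fin m → ℂ)
    (hgen : Generic c (Fin.append u v)) :
    KIz c 1 u v = 0 ∧ KIzBar c 1 u v = 0 := by
  have hvv : ∀ i j, i ≠ j → _ := fun i j hij =>
    hgen (Fin.natAdd n i) (Fin.natAdd n j) (by simpa [Fin.ext_iff] using hij)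
  have huv : ∀ i j, _ := fun (i : Fin n) (j : Fin m) =>
    hgen (Fin.castAdd m i) (Fin.natAdd n j) (by
      intro h
      have := congrArg Fin.val h
      simp at this
      omega)
  simp only [Fin.append_left, Fin.append_right] at hvv huv
  constructor
  · refine KIz_one_eq_zero c hc n m hnm u v (fun i j h => (hvv i j h).1) ?_
      (fun i j => (huv i j).1) ?_
    · intro i j h
      by_cases hij : i = j
      · subst hij
        simp [hc] at h
      · exact (hvv i j hij).2.2.1 (by linear_combination h)
    · intro i j h
      exact (huv i j).2.2.1 (by linear_combination -h)
  · refine KIz_one_eq_zero (-c) (neg_ne_zero.2 hc) n m hnm u v (fun i j h => (hvv i j h).1) ?_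
      (fun i j => (huv i j).1) ?_
    · intro i j h
      by_cases hij : i = j
      · subst hij
        simp [hc] at h
      · exact (hvv i j hij).2.1 (by linear_combination h)
    · intro i j h
      exact (huv i j).2.1 (by linear_combination -h)
end
end

section
/- For all z ∈ ℂ, all generic tuples ū (length n), v̄ (length m), and any complex w such that the augmented tuples remain generic: K^{(z)}_{n+1,m+1}((ū, w−c) | (v̄, w)) = −z·K^{(z)}_{n,m}(ū | v̄), and \bar{K}^{(z)}_{n+1,m+1}((ū, w+c) | (v̄, w)) = −z·\bar{K}^{(z)}_{n,m}(ū | v̄). -/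
open scoped BigOperators

noncomputable section

/-- Common reduction step for both identities. -/
theorem KIz_snoc_aux (c z : ℂ) (n m : ℕ) (u : Fin n → ℂ) (v : Fin m → ℂ) (w : ℂ)
    (h0 : ∀ j, v j - w ≠ 0) (h1 : ∀ j, v j - w + c ≠ 0) :
    KIz c z (Fin.snoc u (w - c) : Fin (n + 1) → ℂ) (Fin.snoc v w : Fin (m + 1) → ℂ)
      = -z * KIz c z u v := by
  unfold KIz
  have hcancel : ∀ j, fC c (w - c) (v j) * fC c (v j) w = 1 := by
    intro j
    have a := h0 j
    have b := h1 j
    have b' : w - c - v j ≠ 0 := fun h => b (by linear_combination -h)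
    unfold fC
    field_simp
    ring
  have hzero : fC c (w - c) w = 0 := by
    unfold fC
    simp
  rw [Matrix.det_succ_row _ (Fin.last m), Finset.sum_eq_single (Fin.last m)]
  · have hsign : ((-1 : ℂ)) ^ ((Fin.last m : ℕ) + (Fin.last m : ℕ)) = 1 :=
      Even.neg_one_pow ⟨_, rfl⟩
    rw [hsign]
    congr 1
    · simp [Fin.prod_univ_castSucc, hzero]
    · congr 1
      ext j k
      have herase : (Finset.univ.erase (Fin.castSucc j) : Finset (Fin (m + 1)))
          = insert (Fin.last m) ((Finset.univ.erase j).map Fin.castSuccEmb) := by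
        ext i
        refine Fin.lastCases ?_ (fun i => ?_) i
        · simp [(Fin.castSucc_lt_last j).ne']
        · simp [(Fin.castSucc_lt_last i).ne]
      have hnot : Fin.last m ∉ ((Finset.univ.erase j).map Fin.castSuccEmb) := by
        simp [(Fin.castSucc_lt_last _).ne]
      simp only [Matrix.submatrix_apply, Matrix.of_apply, Fin.succAbove_last,
        Fin.prod_univ_castSucc, Fin.snoc_castSucc, Fin.snoc_last, herase,
        Finset.prod_insert hnot, Finset.prod_map, Fin.coe_castSuccEmb,
        Fin.castSucc_inj]
      congr 2
      linear_combination (∏ i, fC c (u i) (v j)) *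
        (∏ i ∈ Finset.univ.erase j, fC c (v j) (v i)) * hcancel j
  · intro k _ hk
    simp [Fin.prod_univ_castSucc, hzero, hk.symm]
  · simp

/-- Recursive property of the modified Izergin determinant under the augmentation
`(ū, w∓c)`, `(v̄, w)`. -/
theorem stmt10
    (c : ℂ) (hc : c ≠ 0) (z : ℂ) (n m : ℕ)
    (u : Fin n → ℂ) (v : Fin m → ℂ) (w : ℂ)
    (hgen1 : Generic c (Fin.append (Fin.snoc u (w - c)) v))
    (hgen2 : Generic c (Fin.append (Fin.snoc u (w + c)) v))
    (hgen3 : Generic c (Fin.append u (Fin.snoc v w))) :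
    KIz c z (Fin.snoc u (w - c)) (Fin.snoc v w) = -z * KIz c z u v ∧
      KIzBar c z (Fin.snoc u (w + c)) (Fin.snoc v w) = -z * KIzBar c z u v := by
  have key : ∀ j, v j - w ≠ 0 ∧ v j - w ≠ c ∧ v j - w ≠ -c := by
    intro j
    have h := hgen3 (Fin.natAdd n (Fin.castSucc j)) (Fin.natAdd n (Fin.last m))
      (by simp [Fin.ext_iff, j.isLt.ne])
    simp only [Fin.append_right, Fin.snoc_castSucc, Fin.snoc_last] at h
    exact ⟨h.1, h.2.1, h.2.2.1⟩
  refine ⟨KIz_snoc_aux c z n m u v w (fun j => (key j).1)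
    (fun j h => (key j).2.2 (by linear_combination h)), ?_⟩
  have h := KIz_snoc_aux (-c) z n m u v w (fun j => (key j).1)
    (fun j h => (key j).2.1 (by linear_combination h))
  rw [sub_neg_eq_add] at h
  exact h
end
end
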